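/- arXiv:1907.02712 — 2 statements merged into one kernel-verified Lean document; each statement's English description precedes it below -/
import Mathlib

section
/- Assume I(t,·) ∈ C^{2,1}_loc(Z;ℝ), the energy is κ-uniformly convex, |ℓ|_Lip ≤ κ − δ for some δ ∈ (0,κ], ℓ ∈ W^{1,∞}([0,T];V*) and ℓ′ ∈ BV([0,T];V). Then there is a unique differential solution z of the rate-independent system, and the piecewise affine interpolants z_τ in physical time of the iterates of the local incremental minimization scheme converge to z with the a priori error estimate ‖z_τ(t) − z(t)‖_Z ≤ K τ for all t ∈ [0,T], where K > 0 depends on α, κ, ℓ, z₀, T, F and ‖A‖_{L(Z,Z*)} but not on τ. -/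
open MeasureTheory
open scoped RealInnerProductSpace NNReal

noncomputable section

namespace RIS

variable {Z V X : Type*}
  [NormedAddCommGroup Z] [InnerProductSpace ℝ Z] [CompleteSpace Z]
  [NormedAddCommGroup V] [InnerProductSpace ℝ V] [CompleteSpace V]
  [NormedAddCommGroup X] [NormedSpace ℝ X]

/-- The convex subdifferential of `R : V → ℝ` at `u`, as a subset of the dual `V →L[ℝ] ℝ`. -/
def subdiff (R : V → ℝ) (u : V) : Set (V →L[ℝ] ℝ) :=
  {ξ | ∀ v : V, R u + ξ (v - u) ≤ R v}

/-- The semilinear energy `I(t,z) = ½⟨Az,z⟩ + F(z) − ⟨ℓ(t), z⟩`. -/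
def energy (A : Z →L[ℝ] Z →L[ℝ] ℝ) (F : Z → ℝ) (ℓ : ℝ → V →L[ℝ] ℝ)
    (ι : Z →L[ℝ] V) (t : ℝ) (z : Z) : ℝ :=
  (1 / 2 : ℝ) * A z z + F z - ℓ t (ι z)

/-- `D_z I(t,z) = Az + D_zF(z) − ℓ(t)`, as an element of `Z*` (here `D_zF(z)` and `ℓ(t)`
are elements of `V*`, composed with the embedding `ι : Z ↪ V`). -/
def DI (A : Z →L[ℝ] Z →L[ℝ] ℝ) (DF : Z → V →L[ℝ] ℝ) (ℓ : ℝ → V →L[ℝ] ℝ)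
    (ι : Z →L[ℝ] V) (t : ℝ) (z : Z) : Z →L[ℝ] ℝ :=
  A z + (DF z).comp ι - (ℓ t).comp ι

/-- Local stability: `0 ∈ ∂R(0) + D_z I(t,z)`. -/
def LocStable (R : V → ℝ) (A : Z →L[ℝ] Z →L[ℝ] ℝ) (DF : Z → V →L[ℝ] ℝ)
    (ℓ : ℝ → V →L[ℝ] ℝ) (ι : Z →L[ℝ] V) (t : ℝ) (z : Z) : Prop :=
  ∃ ξ ∈ subdiff R 0, ξ.comp ι + DI A DF ℓ ι t z = 0

/-- The local incremental minimization scheme with step size `τ`: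
`z_{k+1}` minimizes `I(t_k, ·) + R(· − z_k)` over the ball `‖· − z_k‖_V ≤ τ`
and `t_{k+1} = min{t_k + τ − ‖z_{k+1} − z_k‖_V, T}`, starting from `t_0 = 0`, `z_0 = z₀`. -/
def Scheme (A : Z →L[ℝ] Z →L[ℝ] ℝ) (F : Z → ℝ) (R : V → ℝ) (ℓ : ℝ → V →L[ℝ] ℝ)
    (ι : Z →L[ℝ] V) (T τ : ℝ) (z₀ : Z) (t : ℕ → ℝ) (z : ℕ → Z) : Prop :=
  t 0 = 0 ∧ z 0 = z₀ ∧
    ∀ k : ℕ,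
      ‖ι (z (k + 1) - z k)‖ ≤ τ ∧
      (∀ w : Z, ‖ι (w - z k)‖ ≤ τ →
        energy A F ℓ ι (t k) (z (k + 1)) + R (ι (z (k + 1) - z k)) ≤
          energy A F ℓ ι (t k) w + R (ι (w - z k))) ∧
      t (k + 1) = min (t k + τ - ‖ι (z (k + 1) - z k)‖) T

/-- Standing assumptions on the data of the rate-independent system. -/
def StandingAssumptions (ι : Z →L[ℝ] V) (ιX : V →L[ℝ] X)
    (A : Z →L[ℝ] Z →L[ℝ] ℝ) (α : ℝ) (F : Z → ℝ) (DF : Z → V →L[ℝ] ℝ)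
    (D2F : Z → Z →L[ℝ] V →L[ℝ] ℝ) (R : V → ℝ) (ℓ : ℝ → V →L[ℝ] ℝ)
    (L T : ℝ) : Prop :=
  Function.Injective (ι : Z → V) ∧ DenseRange (ι : Z → V) ∧ (∀ w : Z, ‖ι w‖ ≤ ‖w‖) ∧
  Function.Injective (ιX : V → X) ∧
  (∀ z w : Z, A z w = A w z) ∧ 0 < α ∧ (∀ w : Z, α * ‖w‖ ^ 2 ≤ A w w) ∧
  (∀ w : Z, 0 ≤ F w) ∧
  (∀ w : Z, HasFDerivAt F ((DF w).comp ι) w) ∧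
  (∀ w : Z, HasFDerivAt DF (D2F w) w) ∧
  (∃ CF q : ℝ, 0 < CF ∧ 1 ≤ q ∧ ∀ w v : Z, ‖D2F w v‖ ≤ CF * (1 + ‖w‖ ^ q) * ‖v‖) ∧
  0 ≤ L ∧ LipschitzOnWith (Real.toNNReal L) ℓ (Set.Icc 0 T) ∧ 0 < T ∧
  ConvexOn ℝ Set.univ R ∧ LowerSemicontinuous R ∧ (∀ v : V, 0 ≤ R v) ∧
  (∀ (c : ℝ) (v : V), 0 ≤ c → R (c • v) = c * R v) ∧
  (∃ ρ₁ ρ₂ : ℝ, 0 < ρ₁ ∧ 0 < ρ₂ ∧ ∀ v : V, ρ₁ * ‖ιX v‖ ≤ R v ∧ R v ≤ ρ₂ * ‖v‖)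

/-- `κ`-uniform convexity of the energy: `⟨D²_zI(t,z)v,v⟩ ≥ κ‖v‖²_Z`, where
`D²_zI(t,z)[v,v] = ⟨Av,v⟩ + ⟨D²F(z)v, v⟩`. -/
def UniformlyConvex (A : Z →L[ℝ] Z →L[ℝ] ℝ) (D2F : Z → Z →L[ℝ] V →L[ℝ] ℝ)
    (ι : Z →L[ℝ] V) (κ : ℝ) : Prop :=
  0 < κ ∧ ∀ w v : Z, κ * ‖v‖ ^ 2 ≤ A v v + D2F w v (ι v)

/-- A differential solution of the rate-independent system: `y ∈ W^{1,1}(0,T;Z)`,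
`y(0) = z₀` and `0 ∈ ∂R(y'(t)) + D_zI(t, y(t))` for a.e. `t ∈ (0,T)`. -/
def IsDiffSol (A : Z →L[ℝ] Z →L[ℝ] ℝ) (DF : Z → V →L[ℝ] ℝ) (ℓ : ℝ → V →L[ℝ] ℝ)
    (R : V → ℝ) (ι : Z →L[ℝ] V) (T : ℝ) (z₀ : Z) (y : ℝ → Z) : Prop :=
  y 0 = z₀ ∧
  ∃ y' : ℝ → Z,
    IntervalIntegrable y' volume 0 T ∧
    (∀ s ∈ Set.Icc (0 : ℝ) T, y s = z₀ + ∫ r in (0 : ℝ)..s, y' r) ∧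
    (∀ᵐ s ∂(volume.restrict (Set.Ioo (0 : ℝ) T)),
      ∃ ξ ∈ subdiff R (ι (y' s)), ξ.comp ι + DI A DF ℓ ι s (y s) = 0)

set_option linter.unusedSectionVars false

/-! ### Calculus for the operator `B = D_z I + ℓ` -/

lemma strong_mono {B : Z → Z →L[ℝ] ℝ} {H : Z → Z →L[ℝ] Z →L[ℝ] ℝ} {κ : ℝ}
    (hB : ∀ z, HasFDerivAt B (H z) z) (hκ : ∀ z v, κ * ‖v‖ ^ 2 ≤ H z v v) (x y : Z) :
    κ * ‖x - y‖ ^ 2 ≤ (B x - B y) (x - y) := by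
  have hd : ∀ s : ℝ, HasDerivAt (fun s : ℝ => B (y + s • (x - y)) (x - y))
      (H (y + s • (x - y)) (x - y) (x - y)) s := by
    intro s
    have h1 : HasDerivAt (fun s : ℝ => y + s • (x - y)) (x - y) s := by
      simpa using ((hasDerivAt_id s).smul_const (x - y)).const_add y
    have h2 := (hB (y + s • (x - y))).comp_hasDerivAt s h1
    have h3 := h2.clm_apply (hasDerivAt_const s (x - y))
    simpa using h3
  obtain ⟨c, -, hc⟩ := exists_hasDerivAt_eq_slope (fun s : ℝ => B (y + s • (x - y)) (x - y))
    (fun s => H (y + s • (x - y)) (x - y) (x - y)) (zero_lt_one)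
    (fun s _ => (hd s).continuousAt.continuousWithinAt) (fun s _ => hd s)
  have := hκ (y + c • (x - y)) (x - y)
  simp at hc
  simp
  simp at this
  linarith

lemma taylor_bound {B : Z → Z →L[ℝ] ℝ} {H : Z → Z →L[ℝ] Z →L[ℝ] ℝ} {C r : ℝ} (hC : 0 ≤ C)
    (hB : ∀ z, HasFDerivAt B (H z) z)
    (hH : ∀ z₁ z₂, ‖z₁‖ ≤ r → ‖z₂‖ ≤ r → ‖H z₁ - H z₂‖ ≤ C * ‖z₁ - z₂‖)
    {x y : Z} (hx : ‖x‖ ≤ r) (hy : ‖y‖ ≤ r) :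
    ‖B x - B y - H y (x - y)‖ ≤ C * ‖x - y‖ ^ 2 := by
  have hball : ∀ w ∈ segment ℝ y x, ‖w‖ ≤ r := by
    intro w hw
    have := (convex_closedBall (0 : Z) r).segment_subset (by simpa using hy) (by simpa using hx) hw
    simpa using this
  have hseg : ∀ w ∈ segment ℝ y x, ‖w - y‖ ≤ ‖x - y‖ := by
    intro w hw
    have := norm_sub_le_of_mem_segment hw
    simpa using this
  have := (convex_segment y x).norm_image_sub_le_of_norm_hasFDerivWithin_le' (f := B) (f' := H)
    (φ := H y) (C := C * ‖x - y‖) (fun w _ => (hB w).hasFDerivWithinAt)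
    (fun w hw => (hH w y (hball w hw) hy).trans
      (mul_le_mul_of_nonneg_left (hseg w hw) hC))
    (left_mem_segment ℝ y x) (right_mem_segment ℝ y x)
  calc _ ≤ _ := this
    _ = _ := by ring

lemma lip_bound {B : Z → Z →L[ℝ] ℝ} {H : Z → Z →L[ℝ] Z →L[ℝ] ℝ} {M r : ℝ}
    (hB : ∀ z, HasFDerivAt B (H z) z)
    (hH : ∀ z, ‖z‖ ≤ r → ‖H z‖ ≤ M)
    {x y : Z} (hx : ‖x‖ ≤ r) (hy : ‖y‖ ≤ r) :
    ‖B x - B y‖ ≤ M * ‖x - y‖ := by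
  exact (convex_closedBall (0 : Z) r).norm_image_sub_le_of_norm_hasFDerivWithin_le
    (fun w _ => (hB w).hasFDerivWithinAt) (fun w hw => hH w (by simpa using hw))
    (by simpa using hy) (by simpa using hx)

lemma polar_bound (S : Z →L[ℝ] Z →L[ℝ] ℝ) (hS : ∀ v w, S v w = S w v) {c : ℝ} (hc : 0 ≤ c)
    (h : ∀ v, |S v v| ≤ c * ‖v‖ ^ 2) : ‖S‖ ≤ c := by
  have key : ∀ v w, |S v w| ≤ c / 2 * (‖v‖ ^ 2 + ‖w‖ ^ 2) := by
    intro v w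
    have e : S v w = (S (v + w) (v + w) - S (v - w) (v - w)) / 4 := by
      simp; rw [hS w v]; ring
    have h1 := abs_le.1 (h (v + w))
    have h2 := abs_le.1 (h (v - w))
    have hp := parallelogram_law_with_norm ℝ v w
    rw [e, abs_le]
    constructor <;> nlinarith
  refine ContinuousLinearMap.opNorm_le_bound₂ _ hc fun v w => ?_
  rcases eq_or_ne v 0 with rfl | hv
  · simp
  rcases eq_or_ne w 0 with rfl | hw
  · simp
  have h1 := key (‖w‖ • v) (‖v‖ • w)
  have hv' : 0 < ‖v‖ := norm_pos_iff.2 hv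
  have hw' : 0 < ‖w‖ := norm_pos_iff.2 hw
  simp [norm_smul, abs_mul] at h1
  rw [Real.norm_eq_abs]
  have hp : 0 < ‖v‖ * ‖w‖ := mul_pos hv' hw'
  refine le_of_mul_le_mul_left ?_ hp
  nlinarith


/-! ### A Gronwall type comparison for absolutely continuous functions -/

lemma ac_of_dist_le {g W : ℝ → ℝ} {a b : ℝ} (C : ℝ) (hW : AbsolutelyContinuousOnInterval W a b)
    (h : ∀ x ∈ Set.uIcc a b, ∀ y ∈ Set.uIcc a b, dist (g x) (g y) ≤ C * dist (W x) (W y)) :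
    AbsolutelyContinuousOnInterval g a b := by
  have h1 : Filter.Tendsto
      (fun E : ℕ × (ℕ → ℝ × ℝ) => C * ∑ i ∈ Finset.range E.1, dist (W (E.2 i).1) (W (E.2 i).2))
      (AbsolutelyContinuousOnInterval.totalLengthFilter ⊓
        Filter.principal (AbsolutelyContinuousOnInterval.disjWithin a b)) (nhds 0) := by
    simpa using Filter.Tendsto.const_mul C hW
  refine squeeze_zero' (Filter.Eventually.of_forall fun E => Finset.sum_nonneg fun i _ => dist_nonneg)
    ?_ h1
  refine Filter.eventually_inf_principal.2 (Filter.Eventually.of_forall fun E hE => ?_)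
  rw [Finset.mul_sum]
  refine Finset.sum_le_sum fun i hi => ?_
  exact h _ (hE.1 i hi).1 _ (hE.1 i hi).2

lemma exp_neg_lip {a b : ℝ} (ha : 0 ≤ a) (hb : 0 ≤ b) :
    |Real.exp (-a) - Real.exp (-b)| ≤ |a - b| := by
  wlog hab : a ≤ b generalizing a b
  · rw [abs_sub_comm, abs_sub_comm a]; exact this hb ha (le_of_not_ge hab)
  have h1 : Real.exp (-b) ≤ Real.exp (-a) := Real.exp_le_exp.2 (by linarith)
  rw [abs_of_nonneg (by linarith), abs_of_nonpos (by linarith)]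
  have h2 : Real.exp (-b) = Real.exp (-a) * Real.exp (-(b - a)) := by
    rw [← Real.exp_add]; ring_nf
  have h3 := Real.add_one_le_exp (-(b - a))
  have h4 : Real.exp (-a) ≤ 1 := Real.exp_le_one_iff.2 (by linarith)
  have h5 := Real.exp_pos (-a)
  nlinarith

lemma gronwall_compare {B : Z → Z →L[ℝ] ℝ} {H : Z → Z →L[ℝ] Z →L[ℝ] ℝ} {κ C M r T : ℝ}
    (hT : 0 ≤ T) (hκ0 : 0 < κ) (hC : 0 ≤ C)
    (hB : ∀ z, HasFDerivAt B (H z) z) (hκ : ∀ z v, κ * ‖v‖ ^ 2 ≤ H z v v)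
    (hsym : ∀ z v w, H z v w = H z w v)
    (hH : ∀ z₁ z₂, ‖z₁‖ ≤ r → ‖z₂‖ ≤ r → ‖H z₁ - H z₂‖ ≤ C * ‖z₁ - z₂‖)
    (hM : ∀ z, ‖z‖ ≤ r → ‖H z‖ ≤ M)
    {z₀ : Z} {u₁ u₂ v₁ v₂ : ℝ → Z} {q : ℝ → ℝ}
    (hv₁ : IntervalIntegrable v₁ volume 0 T) (hv₂ : IntervalIntegrable v₂ volume 0 T)
    (hq : IntervalIntegrable q volume 0 T) (hq0 : ∀ s, 0 ≤ q s)
    (hu₁ : ∀ s ∈ Set.Icc (0 : ℝ) T, u₁ s = z₀ + ∫ r in (0 : ℝ)..s, v₁ r)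
    (hu₂ : ∀ s ∈ Set.Icc (0 : ℝ) T, u₂ s = z₀ + ∫ r in (0 : ℝ)..s, v₂ r)
    (hr₁ : ∀ s ∈ Set.Icc (0 : ℝ) T, ‖u₁ s‖ ≤ r) (hr₂ : ∀ s ∈ Set.Icc (0 : ℝ) T, ‖u₂ s‖ ≤ r)
    (hmain : ∀ᵐ s ∂(volume.restrict (Set.Ioo (0 : ℝ) T)),
      (B (u₁ s) - B (u₂ s)) (v₁ s - v₂ s) ≤ q s) :
    ∀ s ∈ Set.Icc (0 : ℝ) T, κ * ‖u₁ s - u₂ s‖ ^ 2 ≤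
      2 * (∫ r in (0 : ℝ)..T, q r) *
        Real.exp (C / κ * ∫ r in (0 : ℝ)..T, (‖v₁ r‖ + ‖v₂ r‖)) := by
  set n : ℝ → ℝ := fun r => ‖v₁ r‖ + ‖v₂ r‖ with hn
  have hnI : IntervalIntegrable n volume 0 T := hv₁.norm.add hv₂.norm
  have hn0 : ∀ s, 0 ≤ n s := fun s => by positivity
  have hsub : ∀ a ∈ Set.Icc (0:ℝ) T, ∀ b ∈ Set.Icc (0:ℝ) T, Set.uIcc a b ⊆ Set.uIcc 0 T := by
    intro a ha b hb
    rw [Set.uIcc_of_le hT]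
    exact Set.uIcc_subset_Icc ha hb
  set W : ℝ → ℝ := fun s => ∫ r in (0 : ℝ)..s, n r with hW
  set Q : ℝ → ℝ := fun s => ∫ r in (0 : ℝ)..s, q r with hQ
  have h0mem : (0:ℝ) ∈ Set.Icc (0:ℝ) T := ⟨le_rfl, hT⟩
  have hWmono : ∀ a ∈ Set.Icc (0:ℝ) T, ∀ b ∈ Set.Icc (0:ℝ) T, a ≤ b → W b - W a = ∫ r in a..b, n r := by
    intro a ha b hb _
    simp only [hW]
    rw [intervalIntegral.integral_interval_sub_left (hnI.mono_set (hsub 0 h0mem b hb))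
      (hnI.mono_set (hsub 0 h0mem a ha))]
  have hW0 : ∀ s ∈ Set.Icc (0:ℝ) T, 0 ≤ W s := fun s hs =>
    intervalIntegral.integral_nonneg hs.1 fun x _ => hn0 x
  have hWT : ∀ s ∈ Set.Icc (0:ℝ) T, W s ≤ W T := by
    intro s hs
    have := hWmono s hs T ⟨hT, le_rfl⟩ hs.2
    have h2 : 0 ≤ ∫ r in s..T, n r := intervalIntegral.integral_nonneg hs.2 fun x _ => hn0 x
    linarith
  have hQT : ∀ s ∈ Set.Icc (0:ℝ) T, Q s ≤ Q T := by
    intro s hs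
    have h1 : Q T - Q s = ∫ r in s..T, q r := by
      simp only [hQ]
      rw [intervalIntegral.integral_interval_sub_left hq (hq.mono_set (hsub 0 h0mem s hs))]
    have h2 : 0 ≤ ∫ r in s..T, q r := intervalIntegral.integral_nonneg hs.2 fun x _ => hq0 x
    linarith
  have hWAC : AbsolutelyContinuousOnInterval W 0 T :=
    hnI.absolutelyContinuousOnInterval_intervalIntegral (by rw [Set.uIcc_of_le hT]; exact h0mem)
  have hQAC : AbsolutelyContinuousOnInterval Q 0 T :=
    hq.absolutelyContinuousOnInterval_intervalIntegral (by rw [Set.uIcc_of_le hT]; exact h0mem)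
  have hdist : ∀ (v u : ℝ → Z), IntervalIntegrable v volume 0 T → (∀ s, ‖v s‖ ≤ n s) →
      (∀ s ∈ Set.Icc (0 : ℝ) T, u s = z₀ + ∫ r in (0 : ℝ)..s, v r) →
      ∀ x ∈ Set.Icc (0:ℝ) T, ∀ y ∈ Set.Icc (0:ℝ) T, ‖u x - u y‖ ≤ |W x - W y| := by
    intro v u hv hvn hu x hx y hy
    wlog hxy : x ≤ y generalizing x y
    · rw [norm_sub_rev, abs_sub_comm]; exact this y hy x hx (le_of_not_ge hxy)
    rw [norm_sub_rev, abs_sub_comm, hWmono x hx y hy hxy, hu x hx, hu y hy, add_sub_add_left_eq_sub,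
      intervalIntegral.integral_interval_sub_left (hv.mono_set (hsub 0 h0mem y hy))
      (hv.mono_set (hsub 0 h0mem x hx))]
    refine (intervalIntegral.norm_integral_le_of_norm_le hxy (g := n) ?_
      (hnI.mono_set (hsub x hx y hy))).trans (le_abs_self _)
    exact Filter.Eventually.of_forall fun t _ => hvn t
  have hd₁ := hdist v₁ u₁ hv₁ (fun s => by simp [hn]) hu₁
  have hd₂ := hdist v₂ u₂ hv₂ (fun s => by simp [hn]) hu₂
  set γ : ℝ → ℝ := fun s => (B (u₁ s) - B (u₂ s)) (u₁ s - u₂ s) with hγ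
  have hM0 : 0 ≤ M := (norm_nonneg (H (u₁ 0))).trans (hM (u₁ 0) (hr₁ 0 h0mem))
  have hr0 : 0 ≤ r := (norm_nonneg _).trans (hr₁ 0 h0mem)
  have hγAC : AbsolutelyContinuousOnInterval γ 0 T := by
    refine ac_of_dist_le (8 * M * r) hWAC ?_
    rw [Set.uIcc_of_le hT]
    intro x hx y hy
    rw [Real.dist_eq, Real.dist_eq]
    have e : γ x - γ y = ((B (u₁ x) - B (u₁ y)) - (B (u₂ x) - B (u₂ y))) (u₁ x - u₂ x)
        + (B (u₁ y) - B (u₂ y)) ((u₁ x - u₁ y) - (u₂ x - u₂ y)) := by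
      simp [hγ]; ring
    have b1 : ‖(B (u₁ x) - B (u₁ y)) - (B (u₂ x) - B (u₂ y))‖ ≤ 2 * M * |W x - W y| := by
      refine (norm_sub_le _ _).trans ?_
      have := lip_bound hB hM (hr₁ x hx) (hr₁ y hy)
      have := lip_bound hB hM (hr₂ x hx) (hr₂ y hy)
      have := mul_le_mul_of_nonneg_left (hd₁ x hx y hy) hM0
      have := mul_le_mul_of_nonneg_left (hd₂ x hx y hy) hM0
      linarith
    have b2 : ‖u₁ x - u₂ x‖ ≤ 2 * r := by
      refine (norm_sub_le _ _).trans ?_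
      linarith [hr₁ x hx, hr₂ x hx]
    have b3 : ‖B (u₁ y) - B (u₂ y)‖ ≤ M * (2 * r) := by
      refine (lip_bound hB hM (hr₁ y hy) (hr₂ y hy)).trans ?_
      refine mul_le_mul_of_nonneg_left ?_ hM0
      refine (norm_sub_le _ _).trans ?_
      linarith [hr₁ y hy, hr₂ y hy]
    have b4 : ‖(u₁ x - u₁ y) - (u₂ x - u₂ y)‖ ≤ 2 * |W x - W y| := by
      refine (norm_sub_le _ _).trans ?_
      linarith [hd₁ x hx y hy, hd₂ x hx y hy]
    rw [e, ← Real.norm_eq_abs]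
    refine (norm_add_le _ _).trans ?_
    have c1 := (((B (u₁ x) - B (u₁ y)) - (B (u₂ x) - B (u₂ y))).le_opNorm (u₁ x - u₂ x)).trans
      (mul_le_mul b1 b2 (norm_nonneg _) (by positivity))
    have c2 := ((B (u₁ y) - B (u₂ y)).le_opNorm ((u₁ x - u₁ y) - (u₂ x - u₂ y))).trans
      (mul_le_mul b3 b4 (norm_nonneg _) (by positivity))
    refine (add_le_add c1 c2).trans (le_of_eq ?_)
    ring
  set c : ℝ := C / κ with hc
  have hc0 : 0 ≤ c := by positivity
  set E : ℝ → ℝ := fun s => Real.exp (-(c * W s)) with hE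
  have hEAC : AbsolutelyContinuousOnInterval E 0 T := by
    refine ac_of_dist_le c hWAC ?_
    rw [Set.uIcc_of_le hT]
    intro x hx y hy
    rw [Real.dist_eq, Real.dist_eq]
    refine (exp_neg_lip (mul_nonneg hc0 (hW0 x hx)) (mul_nonneg hc0 (hW0 y hy))).trans ?_
    rw [← mul_sub, abs_mul, abs_of_nonneg hc0]
  have hfAC : AbsolutelyContinuousOnInterval (γ * E - fun s => 2 * Q s) 0 T :=
    (hγAC.mul hEAC).sub (hQAC.const_mul 2)
  set f : ℝ → ℝ := γ * E - fun s => 2 * Q s with hf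
  have hγ0 : ∀ s, κ * ‖u₁ s - u₂ s‖ ^ 2 ≤ γ s := fun s => strong_mono hB hκ _ _
  -- a.e. derivative bound
  have hder : ∀ᵐ s, s ∈ Set.Ioo (0:ℝ) T → deriv f s ≤ 0 := by
    have hmain' := (ae_restrict_iff' measurableSet_Ioo).1 hmain
    filter_upwards [hmain', hv₁.ae_hasDerivAt_integral, hv₂.ae_hasDerivAt_integral,
      hq.ae_hasDerivAt_integral, hnI.ae_hasDerivAt_integral] with s hm i1 i2 i3 i4 hs
    have hsI : s ∈ Set.Icc (0:ℝ) T := ⟨hs.1.le, hs.2.le⟩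
    rw [Set.uIcc_of_le hT] at i1 i2 i3 i4
    have hnh : Set.Ioo (0:ℝ) T ∈ nhds s := Ioo_mem_nhds hs.1 hs.2
    have du : ∀ (v u : ℝ → Z), HasDerivAt (fun x => ∫ r in (0 : ℝ)..x, v r) (v s) s →
        (∀ s ∈ Set.Icc (0 : ℝ) T, u s = z₀ + ∫ r in (0 : ℝ)..s, v r) → HasDerivAt u (v s) s := by
      intro v u h hu
      refine (h.const_add z₀).congr_of_eventuallyEq ?_
      filter_upwards [hnh] with x hx
      exact hu x ⟨hx.1.le, hx.2.le⟩
    have d1 := du v₁ u₁ (i1 hsI 0 h0mem) hu₁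
    have d2 := du v₂ u₂ (i2 hsI 0 h0mem) hu₂
    have dQ : HasDerivAt Q (q s) s := i3 hsI 0 h0mem
    have dW : HasDerivAt W (n s) s := i4 hsI 0 h0mem
    have dE : HasDerivAt E (E s * (-(c * n s))) s := ((dW.const_mul c).neg).exp
    have dγ : HasDerivAt γ ((H (u₁ s) (v₁ s) - H (u₂ s) (v₂ s)) (u₁ s - u₂ s)
        + (B (u₁ s) - B (u₂ s)) (v₁ s - v₂ s)) s :=
      (((hB (u₁ s)).comp_hasDerivAt s d1).sub ((hB (u₂ s)).comp_hasDerivAt s d2)).clm_apply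
        (d1.sub d2)
    have df := ((dγ.mul dE).sub (dQ.const_mul 2)).deriv
    have hfe : f = γ * E - fun s => 2 * Q s := rfl
    rw [hfe]
    refine (le_of_eq df).trans ?_
    -- estimates
    set e := u₁ s - u₂ s with he
    have t1 := taylor_bound hC hB hH (hr₂ s hsI) (hr₁ s hsI)
    have t2 := taylor_bound hC hB hH (hr₁ s hsI) (hr₂ s hsI)
    have g1 : (H (u₁ s) (v₁ s)) e = (B (u₁ s) - B (u₂ s)) (v₁ s)
        + (B (u₂ s) - B (u₁ s) - H (u₁ s) (u₂ s - u₁ s)) (v₁ s) := by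
      rw [hsym, ← neg_sub (u₁ s) (u₂ s), ← he]; simp; ring
    have g2 : (H (u₂ s) (v₂ s)) e = (B (u₁ s) - B (u₂ s)) (v₂ s)
        - (B (u₁ s) - B (u₂ s) - H (u₂ s) (u₁ s - u₂ s)) (v₂ s) := by
      rw [hsym, ← he]; simp
    have k1 := (le_abs_self _).trans ((ContinuousLinearMap.le_opNorm
      (B (u₂ s) - B (u₁ s) - H (u₁ s) (u₂ s - u₁ s)) (v₁ s)).trans
      (mul_le_mul_of_nonneg_right t1 (norm_nonneg _)))
    have k2 := (le_abs_self _).trans ((ContinuousLinearMap.le_opNorm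
      (B (u₁ s) - B (u₂ s) - H (u₂ s) (u₁ s - u₂ s)) (v₂ s)).trans
      (mul_le_mul_of_nonneg_right t2 (norm_nonneg _)))
    rw [norm_sub_rev (u₂ s) (u₁ s)] at k1
    rw [← he] at k1 k2
    have hcγ : C * ‖e‖ ^ 2 ≤ c * γ s := by
      have := mul_le_mul_of_nonneg_left (hγ0 s) hc0
      refine le_trans (le_of_eq ?_) this
      rw [hc]; field_simp
      simp [he]
    have hm' := hm hs
    have bound : (H (u₁ s) (v₁ s) - H (u₂ s) (v₂ s)) e + (B (u₁ s) - B (u₂ s)) (v₁ s - v₂ s)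
        ≤ 2 * q s + c * γ s * n s := by
      have : C * ‖e‖ ^ 2 * n s ≤ c * γ s * n s := mul_le_mul_of_nonneg_right hcγ (hn0 s)
      have e1 : (H (u₁ s) (v₁ s) - H (u₂ s) (v₂ s)) e = (H (u₁ s) (v₁ s)) e - (H (u₂ s) (v₂ s)) e := by
        simp
      have e2 : (B (u₁ s) - B (u₂ s)) (v₁ s - v₂ s) =
        (B (u₁ s) - B (u₂ s)) (v₁ s) - (B (u₁ s) - B (u₂ s)) (v₂ s) := map_sub _ _ _
      have e3 : C * ‖e‖ ^ 2 * n s = C * ‖e‖ ^ 2 * ‖v₁ s‖ + C * ‖e‖ ^ 2 * ‖v₂ s‖ := by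
        simp only [hn]; ring
      rw [e1, g1, g2]
      rw [e2] at hm' ⊢
      linarith
    have hE0 : 0 < E s := Real.exp_pos _
    have hE1 : E s ≤ 1 := by
      apply Real.exp_le_one_iff.2
      have := mul_nonneg hc0 (hW0 s hsI)
      linarith
    have b5 := mul_le_mul_of_nonneg_right bound hE0.le
    have b6 := mul_le_mul_of_nonneg_left hE1 (hq0 s)
    nlinarith
  intro s hs
  have hftc := (hfAC.mono (hsub 0 h0mem s hs)).integral_deriv_eq_sub
  have hIntg : ∫ x in (0:ℝ)..s, deriv f x ≤ 0 := by
    have hii := (hfAC.mono (hsub 0 h0mem s hs)).intervalIntegrable_deriv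
    have : ∫ x in (0:ℝ)..s, deriv f x ≤ ∫ x in (0:ℝ)..s, (0:ℝ) := by
      refine intervalIntegral.integral_mono_ae_restrict hs.1 hii (by simp) ?_
      rw [← Measure.restrict_congr_set Ioo_ae_eq_Icc]
      refine (ae_restrict_iff' measurableSet_Ioo).2 ?_
      filter_upwards [hder] with x hx hxs
      exact hx ⟨hxs.1, hxs.2.trans_le hs.2⟩
    simpa using this
  have hu0 : u₁ 0 = u₂ 0 := by rw [hu₁ 0 h0mem, hu₂ 0 h0mem]; simp
  have hf0 : f 0 = 0 := by simp [hf, hγ, hu0, hQ]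
  have hfs : γ s * E s - 2 * Q s ≤ 0 := by
    have : f s = γ s * E s - 2 * Q s := rfl
    linarith
  refine (hγ0 s).trans ?_
  have hE0 : 0 < E s := Real.exp_pos _
  have h1 : γ s = (γ s * E s) * Real.exp (c * W s) := by
    simp only [hE]; rw [mul_assoc, ← Real.exp_add]; simp
  rw [h1]
  refine mul_le_mul (by linarith [hQT s hs]) (Real.exp_le_exp.2
    (mul_le_mul_of_nonneg_left (hWT s hs) hc0)) (Real.exp_pos _).le ?_
  have : 0 ≤ Q T := intervalIntegral.integral_nonneg hT fun x _ => hq0 x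
  linarith


/-! ### Subdifferentials of sublinear functionals -/

lemma sublin_add {R : V → ℝ} (hc : ConvexOn ℝ Set.univ R)
    (hh : ∀ (c : ℝ) (v : V), 0 ≤ c → R (c • v) = c * R v) (v w : V) : R (v + w) ≤ R v + R w := by
  have h := hc.2 (Set.mem_univ ((2:ℝ) • v)) (Set.mem_univ ((2:ℝ) • w))
    (show (0:ℝ) ≤ 1/2 by norm_num) (show (0:ℝ) ≤ 1/2 by norm_num) (by norm_num)
  rw [smul_smul, smul_smul, hh 2 v (by norm_num), hh 2 w (by norm_num)] at h
  norm_num at h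
  linarith

lemma subdiff_forward {R : V → ℝ} (hadd : ∀ v w, R (v + w) ≤ R v + R w)
    (hh : ∀ (c : ℝ) (v : V), 0 ≤ c → R (c • v) = c * R v) (ι : Z →L[ℝ] V)
    {D : Z →L[ℝ] ℝ} {u : Z} (h : ∃ ξ ∈ subdiff R (ι u), ξ.comp ι + D = 0) :
    (∀ w, (-D) w ≤ R (ι w)) ∧ R (ι u) ≤ (-D) u := by
  obtain ⟨ξ, hξ, he⟩ := h
  have hD : -D = ξ.comp ι := by rw [eq_comm, ← add_eq_zero_iff_eq_neg]; exact he
  rw [hD]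
  have h0 : R 0 = 0 := by simpa using hh 0 0 le_rfl
  constructor
  · intro w
    have h1 := hξ (ι u + ι w)
    have h2 := hadd (ι u) (ι w)
    simp only [add_sub_cancel_left] at h1
    simp only [ContinuousLinearMap.comp_apply]
    linarith
  · have h1 := hξ 0
    simp only [zero_sub, map_neg, h0] at h1
    simp only [ContinuousLinearMap.comp_apply]
    linarith

lemma subdiff_backward {R : V → ℝ} (hadd : ∀ v w, R (v + w) ≤ R v + R w)
    (hh : ∀ (c : ℝ) (v : V), 0 ≤ c → R (c • v) = c * R v) {ρ : ℝ} (hρ : ∀ v, R v ≤ ρ * ‖v‖)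
    (ι : Z →L[ℝ] V) (hι : Function.Injective ι)
    {D : Z →L[ℝ] ℝ} {u : Z} (h1 : ∀ w, (-D) w ≤ R (ι w)) (h2 : R (ι u) ≤ (-D) u) :
    ∃ ξ ∈ subdiff R (ι u), ξ.comp ι + D = 0 := by
  let e := LinearEquiv.ofInjective (ι : Z →ₗ[ℝ] V) hι
  let f : V →ₗ.[ℝ] ℝ := ⟨LinearMap.range (ι : Z →ₗ[ℝ] V), ((-D : Z →L[ℝ] ℝ) : Z →ₗ[ℝ] ℝ) ∘ₗ (e.symm : _ →ₗ[ℝ] Z)⟩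
  have hf : ∀ w : Z, ∀ hw : ι w ∈ f.domain, f ⟨ι w, hw⟩ = (-D) w := by
    intro w hw
    have : e.symm ⟨ι w, hw⟩ = w := by
      rw [LinearEquiv.symm_apply_eq]; rfl
    change (-D) (e.symm ⟨ι w, hw⟩) = _
    rw [this]
  obtain ⟨g, hg1, hg2⟩ := exists_extension_of_le_sublinear f R (fun c hc x => hh c x hc.le) hadd (by
    rintro ⟨x, hx⟩
    obtain ⟨w, hw⟩ := id hx
    have hw' : ι w = x := hw
    subst hw'
    exact (hf w hx).trans_le (h1 w))
  have hb : ∀ v, ‖g v‖ ≤ ρ * ‖v‖ := by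
    intro v
    rw [Real.norm_eq_abs, abs_le]
    have a1 := (hg2 v).trans (hρ v)
    have a2 := (hg2 (-v)).trans (hρ (-v))
    rw [map_neg, norm_neg] at a2
    exact ⟨by linarith, a1⟩
  have hgι : ∀ w, g (ι w) = (-D) w := fun w => by
    have hw : ι w ∈ f.domain := ⟨w, rfl⟩
    rw [← hf w hw]; exact hg1 ⟨ι w, hw⟩
  refine ⟨g.mkContinuous ρ hb, ?_, ?_⟩
  · intro v
    have h3 := hg2 v
    have h4 := hgι u
    simp only [LinearMap.mkContinuous_apply, map_sub]
    linarith
  · ext w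
    simp [hgι]

/-- Collected abstract data of the convex rate-independent system, everything seen on `Z`. -/
structure Setting (B : Z → Z →L[ℝ] ℝ) (H : Z → Z →L[ℝ] Z →L[ℝ] ℝ) (j : Z → ℝ)
    (f f' : ℝ → Z →L[ℝ] ℝ) (ω : ℝ → ℝ) (κ C M r L Λ ρ T : ℝ) : Prop where
  T_pos : 0 < T
  κ_pos : 0 < κ
  C_nn : 0 ≤ C
  L_nn : 0 ≤ L
  Λ_nn : 0 ≤ Λ
  M_nn : 0 ≤ M
  Lκ : Λ * κ = L
  der : ∀ z, HasFDerivAt B (H z) z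
  coer : ∀ z v, κ * ‖v‖ ^ 2 ≤ H z v v
  sym : ∀ z v w, H z v w = H z w v
  lipH : ∀ z₁ z₂, ‖z₁‖ ≤ r → ‖z₂‖ ≤ r → ‖H z₁ - H z₂‖ ≤ C * ‖z₁ - z₂‖
  bdH : ∀ z, ‖z‖ ≤ r → ‖H z‖ ≤ M
  j_nn : ∀ v, 0 ≤ j v
  j_add : ∀ v w, j (v + w) ≤ j v + j w
  j_smul : ∀ (c : ℝ) v, 0 ≤ c → j (c • v) = c * j v
  j_le : ∀ v, j v ≤ ρ * ‖v‖
  ρ_nn : 0 ≤ ρ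
  derf : ∀ s ∈ Set.Icc (0:ℝ) T, HasDerivAt f (f' s) s
  lipf : ∀ x ∈ Set.Icc (0:ℝ) T, ∀ y ∈ Set.Icc (0:ℝ) T, ‖f x - f y‖ ≤ L * |x - y|
  bv : ∀ x ∈ Set.Icc (0:ℝ) T, ∀ y ∈ Set.Icc (0:ℝ) T, x ≤ y → ‖f' y - f' x‖ ≤ ω y - ω x

/-- Discrete trajectories. -/
structure Grid (B : Z → Z →L[ℝ] ℝ) (j : Z → ℝ)
    (f : ℝ → Z →L[ℝ] ℝ) (Λ T τ : ℝ) (z₀ : Z) (N : ℕ) (t : ℕ → ℝ) (w : ℕ → Z) : Prop where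
  τ_pos : 0 < τ
  N_pos : 0 < N
  t0 : t 0 = 0
  tN : t N = T
  w0 : w 0 = z₀
  lt : ∀ k < N, t k < t (k + 1)
  le : ∀ k < N, t (k + 1) - t k ≤ τ
  stab : ∀ k ≤ N, ∀ v, (f (t k) - B (w k)) v ≤ j v
  diss : ∀ k < N, j (w (k + 1) - w k) ≤ (f (t (k + 1)) - B (w (k + 1))) (w (k + 1) - w k)
  inc : ∀ k < N, ‖w (k + 1) - w k‖ ≤ Λ * (t (k + 1) - t k)

/-! ### The scheme produces a grid -/

/-- First order condition for the minimisation of a differentiable function plus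
a sublinear functional along a segment. -/
lemma first_order {E : Z → ℝ} {E' : Z →L[ℝ] ℝ} {j : Z → ℝ} {x y d : Z} (hE : HasFDerivAt E E' x)
    (c : ℝ) (hmin : ∀ᶠ s in nhdsWithin (0:ℝ) (Set.Ioi 0),
      E x + j (x - y) ≤ E (x + s • d) + (j (x - y) + s * c)) : 0 ≤ E' d + c := by
  have hl : HasDerivAt (fun s : ℝ => x + s • d) d 0 := by
    simpa using ((hasDerivAt_id (0:ℝ)).smul_const d).const_add x
  have h1 : HasDerivAt (fun s : ℝ => E (x + s • d)) (E' d) 0 := by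
    have hE' : HasFDerivAt E E' (x + (0:ℝ) • d) := by simpa using hE
    exact hE'.comp_hasDerivAt (0:ℝ) hl
  have h2 := (hasDerivAt_iff_tendsto_slope_zero.1 h1).mono_left
    (nhdsWithin_mono (0:ℝ) (show Set.Ioi (0:ℝ) ⊆ {0}ᶜ from fun s hs => ne_of_gt hs))
  have h3 := h2.add_const c
  refine ge_of_tendsto h3 ?_
  filter_upwards [hmin, self_mem_nhdsWithin] with s hs hs0
  have hs0 : (0:ℝ) < s := hs0
  simp only [zero_add, zero_smul, add_zero, smul_eq_mul]
  have : 0 ≤ s⁻¹ * (E (x + s • d) - E x + s * c) := mul_nonneg (inv_nonneg.2 hs0.le) (by linarith)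
  rw [mul_add, inv_mul_cancel_left₀ hs0.ne'] at this
  exact this

lemma scheme_step {B : Z → Z →L[ℝ] ℝ} {H : Z → Z →L[ℝ] Z →L[ℝ] ℝ} {R : V → ℝ} {ι : Z →L[ℝ] V}
    {f : ℝ → Z →L[ℝ] ℝ} {κ L Λ τ : ℝ} (hκ0 : 0 < κ) (hLκ : Λ * κ = L) (hΛ1 : Λ < 1) (hΛ0 : 0 ≤ Λ)
    (hB : ∀ z, HasFDerivAt B (H z) z) (hκ : ∀ z v, κ * ‖v‖ ^ 2 ≤ H z v v)
    (hι : ∀ w, ‖ι w‖ ≤ ‖w‖) (hτ : 0 < τ)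
    (hadd : ∀ v w, R (v + w) ≤ R v + R w)
    (hh : ∀ (c : ℝ) (v : V), 0 ≤ c → R (c • v) = c * R v)
    {E : Z → ℝ} {s₀ s₁ : ℝ} {x y : Z} (hE : HasFDerivAt E (B x - f s₁) x)
    (hstab : ∀ v, (f s₀ - B y) v ≤ R (ι v)) (hf : ‖f s₁ - f s₀‖ ≤ L * (s₁ - s₀))
    (hs : s₁ - s₀ ≤ τ) (hs0 : s₀ ≤ s₁) (hx : ‖ι (x - y)‖ ≤ τ)
    (hmin : ∀ w : Z, ‖ι (w - y)‖ ≤ τ → E x + R (ι (x - y)) ≤ E w + R (ι (w - y))) :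
    ‖x - y‖ ≤ Λ * (s₁ - s₀) ∧ (∀ v, (f s₁ - B x) v ≤ R (ι v)) ∧
      R (ι (x - y)) ≤ (f s₁ - B x) (x - y) := by
  have hd : R (ι (x - y)) ≤ (f s₁ - B x) (x - y) := by
    have := first_order (j := fun w => R (ι w)) (y := y) (d := y - x) hE (-R (ι (x - y))) (by
      have : Set.Ioo (0:ℝ) 1 ∈ nhdsWithin (0:ℝ) (Set.Ioi 0) := Ioo_mem_nhdsGT (by norm_num)
      filter_upwards [this] with s hs
      have e : x + s • (y - x) - y = (1 - s) • (x - y) := by module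
      have h1 := hmin (x + s • (y - x)) (by
        rw [e, map_smul, norm_smul, Real.norm_of_nonneg (by linarith [hs.2])]
        have := norm_nonneg (ι (x - y))
        nlinarith [hs.1, hs.2])
      rw [e, map_smul, hh _ _ (by linarith [hs.2])] at h1
      linarith)
    have e2 : (B x - f s₁) (y - x) = (f s₁ - B x) (x - y) := by
      simp; ring
    linarith
  have hb : ‖x - y‖ ≤ Λ * (s₁ - s₀) := by
    have h1 := strong_mono hB hκ x y
    have h2 := hstab (x - y)
    have h3 : (B x - B y) (x - y) ≤ (f s₁ - f s₀) (x - y) := by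
      simp only [sub_apply] at *
      linarith
    have h4 : (f s₁ - f s₀) (x - y) ≤ L * (s₁ - s₀) * ‖x - y‖ :=
      (le_abs_self _).trans (((f s₁ - f s₀).le_opNorm _).trans (by gcongr))
    rcases eq_or_lt_of_le (norm_nonneg (x - y)) with h0 | h0
    · rw [← h0]; exact mul_nonneg hΛ0 (by linarith)
    · have : κ * ‖x - y‖ * ‖x - y‖ ≤ κ * (Λ * (s₁ - s₀)) * ‖x - y‖ := by
        rw [← hLκ] at h4
        nlinarith
      exact le_of_mul_le_mul_left (le_of_mul_le_mul_right this h0) hκ0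
  refine ⟨hb, ?_, hd⟩
  intro v
  have := first_order (j := fun w => R (ι w)) (y := y) (d := v) hE (R (ι v)) (by
      have hlt : ‖ι (x - y)‖ < τ := by
        refine (hι _).trans_lt (hb.trans_lt ?_)
        nlinarith
      have hc : Filter.Tendsto (fun s : ℝ => ‖ι (x + s • v - y)‖) (nhds 0) (nhds ‖ι (x - y)‖) := by
        have : Continuous (fun s : ℝ => ‖ι (x + s • v - y)‖) := by fun_prop
        simpa using this.tendsto 0
      have hc' := (hc.eventually_lt_const hlt).filter_mono (nhdsWithin_le_nhds (s := Set.Ioi 0))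
      filter_upwards [hc', self_mem_nhdsWithin] with s hs hs0
      have h1 := hmin _ hs.le
      have e : x + s • v - y = (x - y) + s • v := by abel
      have h2 := hadd (ι (x - y)) (ι (s • v))
      rw [map_smul, hh _ _ (le_of_lt hs0)] at h2
      rw [e, map_add, map_smul] at h1
      linarith)
  simp only [sub_apply] at *
  linarith


lemma scheme_grid {B : Z → Z →L[ℝ] ℝ} {H : Z → Z →L[ℝ] Z →L[ℝ] ℝ} {R : V → ℝ} {ι : Z →L[ℝ] V}
    {f f' : ℝ → Z →L[ℝ] ℝ} {ω : ℝ → ℝ} {κ C M r L Λ ρ T : ℝ}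
    (S : Setting B H (fun v => R (ι v)) f f' ω κ C M r L Λ ρ T) (hΛ1 : Λ < 1)
    (hι : ∀ w, ‖ι w‖ ≤ ‖w‖)
    (hadd : ∀ v w, R (v + w) ≤ R v + R w)
    (hh : ∀ (c : ℝ) (v : V), 0 ≤ c → R (c • v) = c * R v)
    {A : Z →L[ℝ] Z →L[ℝ] ℝ} {F : Z → ℝ} {ℓ : ℝ → V →L[ℝ] ℝ}
    (hE : ∀ s z, HasFDerivAt (energy A F ℓ ι s) (B z - f s) z)
    {τ : ℝ} (hτ : 0 < τ) {z₀ : Z} {t : ℕ → ℝ} {z : ℕ → Z}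
    (hsch : Scheme A F R ℓ ι T τ z₀ t z) (hz₀ : ∀ v, (f 0 - B z₀) v ≤ R (ι v))
    {N : ℕ} (hN : t N = T ∧ ∀ k < N, t k < T) :
    Grid B (fun v => R (ι v)) f Λ T τ z₀ N t (fun k => z (k + 1)) ∧
      ∀ k, ‖z (k + 1) - z k‖ ≤ Λ * τ := by
  obtain ⟨ht0, hz0, hst⟩ := hsch
  have hT := S.T_pos
  have hΛ := S.Λ_nn
  have P : ∀ k, 0 ≤ t (k - 1) ∧ t (k - 1) ≤ t k ∧ t k - t (k - 1) ≤ τ ∧ t k ≤ T ∧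
      ∀ v, (f (t (k - 1)) - B (z k)) v ≤ R (ι v) := by
    have step : ∀ k, (0 ≤ t (k - 1) ∧ t (k - 1) ≤ t k ∧ t k - t (k - 1) ≤ τ ∧ t k ≤ T ∧
      ∀ v, (f (t (k - 1)) - B (z k)) v ≤ R (ι v)) → (∀ v, (f (t k) - B (z (k+1))) v ≤ R (ι v)) := by
      rintro k ⟨h1, h2, h3, h4, h5⟩
      refine (scheme_step (E := energy A F ℓ ι (t k)) (y := z k) (τ := τ) S.κ_pos S.Lκ hΛ1 hΛ S.der S.coer hι hτ
        hadd hh (hE _ _) h5 ?_ h3 h2 (hst k).1 (hst k).2.1).2.1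
      have := S.lipf (t k) ⟨by linarith, h4⟩ (t (k-1)) ⟨h1, by linarith⟩
      rwa [abs_of_nonneg (by linarith)] at this
    intro k
    induction k with
    | zero => simp [ht0, hz0, hτ.le, hT.le]; simpa using hz₀
    | succ k ih =>
      obtain ⟨h1, h2, h3, h4, h5⟩ := id ih
      have h6 := step k ih
      obtain ⟨a1, a2, a3⟩ := hst k
      have := norm_nonneg (ι (z (k+1) - z k))
      simp only [Nat.add_sub_cancel]
      refine ⟨by linarith, ?_, ?_, ?_, h6⟩
      · rw [a3]; exact le_min (by linarith) h4
      · have : t (k+1) ≤ _ := a3.trans_le (min_le_left _ _)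
        linarith
      · rw [a3]; exact min_le_right _ _
  have step : ∀ k, ‖z (k+1) - z k‖ ≤ Λ * (t k - t (k-1)) ∧ (∀ v, (f (t k) - B (z (k+1))) v ≤ R (ι v)) ∧
      R (ι (z (k+1) - z k)) ≤ (f (t k) - B (z (k+1))) (z (k+1) - z k) := by
    intro k
    obtain ⟨h1, h2, h3, h4, h5⟩ := P k
    refine scheme_step (E := energy A F ℓ ι (t k)) (y := z k) (τ := τ) S.κ_pos S.Lκ hΛ1 hΛ S.der S.coer hι hτ
      hadd hh (hE _ _) h5 ?_ h3 h2 (hst k).1 (hst k).2.1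
    have := S.lipf (t k) ⟨by linarith, h4⟩ (t (k-1)) ⟨h1, by linarith⟩
    rwa [abs_of_nonneg (by linarith)] at this
  have hinc : ∀ k, ‖z (k + 1) - z k‖ ≤ Λ * τ := fun k =>
    (step k).1.trans (mul_le_mul_of_nonneg_left (P k).2.2.1 hΛ)
  refine ⟨⟨hτ, ?_, ht0, hN.1, ?_, ?_, ?_, ?_, ?_, ?_⟩, hinc⟩
  · rcases Nat.eq_zero_or_pos N with h | h
    · rw [h, ht0] at hN; linarith [hN.1]
    · exact h
  · have := (step 0).1
    simp only [Nat.zero_sub, sub_self, mul_zero, zero_add] at this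
    have := sub_eq_zero.1 (norm_le_zero_iff.1 this)
    simp [this, hz0]
  · intro k hk
    obtain ⟨a1, a2, a3⟩ := hst k
    rw [a3]
    refine lt_min ?_ (hN.2 k hk)
    have := (hι _).trans (hinc k)
    nlinarith
  · intro k hk
    exact (P (k+1)).2.2.1
  · intro k hk
    exact (step k).2.1
  · intro k hk
    exact (step (k+1)).2.2
  · intro k hk
    exact (step (k+1)).1


section discrete

variable {B : Z → Z →L[ℝ] ℝ} {H : Z → Z →L[ℝ] Z →L[ℝ] ℝ} {j : Z → ℝ}
    {f f' : ℝ → Z →L[ℝ] ℝ} {ω : ℝ → ℝ} {κ C M r L Λ ρ T τ : ℝ} {z₀ : Z} {N : ℕ} {t : ℕ → ℝ} {w : ℕ → Z}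

lemma Setting.ω_mono (S : Setting B H j f f' ω κ C M r L Λ ρ T) {x y : ℝ} (hx : 0 ≤ x) (hxy : x ≤ y)
    (hy : y ≤ T) : ω x ≤ ω y := by
  have := S.bv x ⟨hx, hxy.trans hy⟩ y ⟨hx.trans hxy, hy⟩ hxy
  linarith [norm_nonneg (f' y - f' x)]

lemma Setting.mean_der (S : Setting B H j f f' ω κ C M r L Λ ρ T) {a b p x y : ℝ} (ha : 0 ≤ a)
    (hb : b ≤ T) (hp : p ∈ Set.Icc a b) (hx : x ∈ Set.Icc a b) (hy : y ∈ Set.Icc a b) :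
    ‖f y - f x - (y - x) • f' p‖ ≤ (ω b - ω a) * |y - x| := by
  have h1 : ∀ s ∈ Set.Icc a b, HasDerivWithinAt (fun s => f s - s • f' p) (f' s - f' p) (Set.Icc a b) s := by
    intro s hs
    have := (S.derf s ⟨ha.trans hs.1, hs.2.trans hb⟩).sub ((hasDerivAt_id s).smul_const (f' p))
    simp only [one_smul] at this
    exact this.hasDerivWithinAt
  have h2 : ∀ s ∈ Set.Icc a b, ‖f' s - f' p‖ ≤ ω b - ω a := by
    intro s hs
    rcases le_total s p with h | h
    · have := S.bv s ⟨ha.trans hs.1, hs.2.trans hb⟩ p ⟨ha.trans hp.1, hp.2.trans hb⟩ h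
      rw [norm_sub_rev]
      have := S.ω_mono ha hs.1 (hs.2.trans hb)
      have := S.ω_mono (ha.trans hp.1) hp.2 hb
      linarith
    · have := S.bv p ⟨ha.trans hp.1, hp.2.trans hb⟩ s ⟨ha.trans hs.1, hs.2.trans hb⟩ h
      have := S.ω_mono ha hp.1 (hp.2.trans hb)
      have := S.ω_mono (ha.trans hs.1) hs.2 hb
      linarith
  have h3 := (convex_Icc a b).norm_image_sub_le_of_norm_hasDerivWithin_le h1 h2 hx hy
  rw [Real.norm_eq_abs] at h3
  have e : f y - f x - (y - x) • f' p = f y - y • f' p - (f x - x • f' p) := by module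
  rw [e]
  exact h3

lemma step_est (S : Setting B H j f f' ω κ C M r L Λ ρ T) {a b c : ℝ} (ha : 0 ≤ a) (hab : a < b)
    (hbc : b < c) (hc : c ≤ T) {x y u : Z} (hx : ‖x‖ ≤ r) (hy : ‖y‖ ≤ r) (hu : ‖u‖ ≤ r)
    (hxy : ‖y - x‖ ≤ Λ * (b - a)) (hyu : ‖u - y‖ ≤ Λ * (c - b))
    (hneg : ((f c - B u) - (f b - B y)) (y - x) ≤ 0) :
    ((f b - B y) - (f a - B x)) (y - x) ≤ (b - a) ^ 2 *
      ((1 / 2 * H u ((c - b)⁻¹ • (u - y)) ((c - b)⁻¹ • (u - y))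
        - 1 / 2 * H y ((b - a)⁻¹ • (y - x)) ((b - a)⁻¹ • (y - x)))
        + Λ * (ω c - ω a) + 2 * C * Λ ^ 3 * (c - a)) := by
  set h := b - a with hh
  set k := c - b with hk
  have h0 : 0 < h := by linarith
  have k0 : 0 < k := by linarith
  have hC := S.C_nn
  have hΛ := S.Λ_nn
  set v := h⁻¹ • (y - x) with hv
  set v' := k⁻¹ • (u - y) with hv'
  have ev : y - x = h • v := by rw [hv, smul_inv_smul₀ h0.ne']
  have ev' : u - y = k • v' := by rw [hv', smul_inv_smul₀ k0.ne']
  have nv : ‖v‖ ≤ Λ := by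
    rw [ev, norm_smul, Real.norm_of_nonneg h0.le, mul_comm] at hxy
    exact le_of_mul_le_mul_right hxy h0
  have nv' : ‖v'‖ ≤ Λ := by
    rw [ev', norm_smul, Real.norm_of_nonneg k0.le, mul_comm] at hyu
    exact le_of_mul_le_mul_right hyu k0
  -- load differences
  have hap : ∀ (g : Z →L[ℝ] ℝ) (v : Z) (c d : ℝ), ‖g‖ ≤ c → ‖v‖ ≤ d → |g v| ≤ c * d := by
    intro g v c d hc hd
    exact (g.le_opNorm v).trans (mul_le_mul hc hd (norm_nonneg _) ((norm_nonneg _).trans hc))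
  have l1 := hap _ v _ _ (S.mean_der ha (by linarith) (p := b) (x := a) (y := b) (b := b) ⟨hab.le, le_rfl⟩
    ⟨le_rfl, hab.le⟩ ⟨hab.le, le_rfl⟩) nv
  have l2 := hap _ v _ _ (S.mean_der (a := b) (by linarith) hc (p := b) (x := b) (y := c) ⟨le_rfl, hbc.le⟩
    ⟨le_rfl, hbc.le⟩ ⟨hbc.le, le_rfl⟩) nv
  rw [abs_of_pos h0] at l1
  rw [abs_of_pos k0] at l2
  -- Taylor
  have t1 := hap _ v _ _ (taylor_bound hC S.der S.lipH hx hy) nv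
  have t2 := hap _ v _ _ (taylor_bound hC S.der S.lipH hu hy) nv
  have nxy : ‖x - y‖ = h * ‖v‖ := by rw [norm_sub_rev, ev, norm_smul, Real.norm_of_nonneg h0.le]
  have nuy : ‖u - y‖ = k * ‖v'‖ := by rw [ev', norm_smul, Real.norm_of_nonneg k0.le]
  have exy : x - y = - (h • v) := by rw [← ev]; abel
  rw [nxy, exy] at t1
  rw [nuy, ev'] at t2
  have l3 := hap ((H u - H y) v') v' _ _ ((ContinuousLinearMap.le_opNorm _ _).trans
    (mul_le_mul (S.lipH u y hu hy) nv' (norm_nonneg _) (by positivity))) nv'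
  rw [nuy] at l3
  have hpos := (mul_nonneg S.κ_pos.le (sq_nonneg _)).trans (S.coer y (v' - v))
  have hs := S.sym y v' v
  rw [ev]
  rw [ev] at hneg
  have n1 : ‖v‖ ^ 2 ≤ Λ ^ 2 := by gcongr
  have n2 : ‖v'‖ ^ 2 ≤ Λ ^ 2 := by gcongr
  simp only [sub_apply, map_sub, map_neg, map_smul, smul_eq_mul,
    FunLike.coe_smul, Pi.smul_apply, neg_apply] at *
  rw [abs_le] at l1 l2 t1 t2 l3
  have t1' : C * (h * ‖v‖) ^ 2 * Λ ≤ C * Λ ^ 3 * h ^ 2 := by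
    have : C * (h * ‖v‖) ^ 2 * Λ = C * Λ * h ^ 2 * ‖v‖ ^ 2 := by ring
    rw [this]
    have : C * Λ ^ 3 * h ^ 2 = C * Λ * h ^ 2 * Λ ^ 2 := by ring
    rw [this]
    gcongr
  have t2' : C * (k * ‖v'‖) ^ 2 * Λ ≤ C * Λ ^ 3 * k ^ 2 := by
    have : C * (k * ‖v'‖) ^ 2 * Λ = C * Λ * k ^ 2 * ‖v'‖ ^ 2 := by ring
    rw [this]
    have : C * Λ ^ 3 * k ^ 2 = C * Λ * k ^ 2 * Λ ^ 2 := by ring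
    rw [this]
    gcongr
  have l3' : C * (k * ‖v'‖) * Λ * Λ ≤ C * Λ ^ 3 * k := by
    have : C * Λ ^ 3 * k = C * (k * Λ) * Λ * Λ := by ring
    rw [this]
    gcongr
  -- scalar conclusion
  have e1 : f b v - f a v - (B y v - B x v) ≤ h * (f' b v - H y v v + Λ * (ω b - ω a) + C * Λ ^ 3 * h) := by
    linarith [l1.2, t1.2]
  have e2 : 0 ≤ H y v' v - f' b v + Λ * (ω c - ω b) + C * Λ ^ 3 * k := by
    have : 0 ≤ k * (H y v' v - f' b v + Λ * (ω c - ω b) + C * Λ ^ 3 * k) := by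
      have : f c v - B u v - (f b v - B y v) ≤ 0 := by
        have h9 : h * (f c v - B u v - (f b v - B y v)) ≤ 0 := by linarith
        exact nonpos_of_mul_nonpos_right h9 h0
      linarith [l2.1, t2.2]
    exact nonneg_of_mul_nonneg_right this k0
  have e3 : f' b v - H y v v + Λ * (ω b - ω a) + C * Λ ^ 3 * h ≤
      1 / 2 * H u v' v' - 1 / 2 * H y v v + Λ * (ω c - ω a) + 2 * C * Λ ^ 3 * (c - a) := by
    have : c - a = h + k := by rw [hh, hk]; ring
    rw [this]
    have : 0 ≤ C * Λ ^ 3 * h := by positivity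
    have : 0 ≤ C * Λ ^ 3 * k := by positivity
    linarith [l3.1]
  calc _ = h * (f b v - f a v - (B y v - B x v)) := by ring
    _ ≤ h * (h * (f' b v - H y v v + Λ * (ω b - ω a) + C * Λ ^ 3 * h)) := by gcongr
    _ ≤ h * (h * (1 / 2 * H u v' v' - 1 / 2 * H y v v + Λ * (ω c - ω a) + 2 * C * Λ ^ 3 * (c - a))) := by gcongr
    _ = _ := by ring

end discrete


section discrete

variable {B : Z → Z →L[ℝ] ℝ} {H : Z → Z →L[ℝ] Z →L[ℝ] ℝ} {j : Z → ℝ}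
    {f f' : ℝ → Z →L[ℝ] ℝ} {ω : ℝ → ℝ} {κ C M r L Λ ρ T τ : ℝ} {z₀ : Z} {N : ℕ} {t : ℕ → ℝ} {w : ℕ → Z}

lemma Grid.mono (G : Grid B j f Λ T τ z₀ N t w) {k l : ℕ} (hkl : k ≤ l) (hl : l ≤ N) : t k ≤ t l := by
  induction l, hkl using Nat.le_induction with
  | base => exact le_rfl
  | succ l h ih => exact (ih (by omega)).trans (G.lt l (by omega)).le

lemma Grid.mem (G : Grid B j f Λ T τ z₀ N t w) {k : ℕ} (hk : k ≤ N) : t k ∈ Set.Icc (0:ℝ) T := by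
  have h1 := G.mono (Nat.zero_le k) hk
  have h2 := G.mono hk le_rfl
  rw [G.t0] at h1
  rw [G.tN] at h2
  exact ⟨h1, h2⟩

lemma Grid.norm_le (G : Grid B j f Λ T τ z₀ N t w) (hΛ : 0 ≤ Λ) (hr : ‖z₀‖ + Λ * T ≤ r)
    {k : ℕ} (hk : k ≤ N) : ‖w k‖ ≤ r := by
  have : ‖w k‖ ≤ ‖z₀‖ + Λ * t k := by
    induction k with
    | zero => rw [G.w0, G.t0]; simp
    | succ k ih =>
      have h1 := ih (by omega)
      have h2 := G.inc k (by omega)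
      have h3 := norm_add_le (w k) (w (k+1) - w k)
      rw [add_sub_cancel] at h3
      linarith
  have h2 := mul_le_mul_of_nonneg_left (G.mem hk).2 hΛ
  linarith

/-- The local dissipation defect of the grid. -/
def Sdef (B : Z → Z →L[ℝ] ℝ) (f : ℝ → Z →L[ℝ] ℝ) (t : ℕ → ℝ) (w : ℕ → Z) (k : ℕ) : ℝ :=
  ((f (t (k + 1)) - B (w (k + 1))) - (f (t k) - B (w k))) (w (k + 1) - w k)

lemma Grid.S_nonneg (G : Grid B j f Λ T τ z₀ N t w) {k : ℕ} (hk : k < N) : 0 ≤ Sdef B f t w k := by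
  have h1 := G.diss k hk
  have h2 := G.stab k hk.le (w (k+1) - w k)
  unfold Sdef
  rw [sub_apply]
  linarith

/-- Constant of the summed dissipation defect. -/
def cK1 (ω : ℝ → ℝ) (C M L Λ T : ℝ) : ℝ :=
  1 / 2 * M * Λ ^ 2 + 2 * Λ * (ω T - ω 0) + 4 * C * Λ ^ 3 * T + L * Λ

lemma Grid.sum_S (S : Setting B H j f f' ω κ C M r L Λ ρ T) (G : Grid B j f Λ T τ z₀ N t w)
    (hr : ‖z₀‖ + Λ * T ≤ r) :
    ∑ k ∈ Finset.range N, Sdef B f t w k ≤ cK1 ω C M L Λ T * τ ^ 2 := by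
  have hΛ := S.Λ_nn
  have hC := S.C_nn
  have hL := S.L_nn
  have hM := S.M_nn
  have hT := S.T_pos
  have hτ := G.τ_pos
  have hn := fun {k : ℕ} (hk : k ≤ N) => G.norm_le hΛ hr hk
  obtain ⟨n, rfl⟩ : ∃ n, N = n + 1 := ⟨N - 1, by have := G.N_pos; omega⟩
  set v : ℕ → Z := fun k => (t (k + 1) - t k)⁻¹ • (w (k + 1) - w k) with hv
  set Φ : ℕ → ℝ := fun k => 1 / 2 * H (w (k+1)) (v k) (v k) + Λ * (ω (t (k+1)) + ω (t k))
    + 2 * C * Λ ^ 3 * (t (k + 1) + t k) with hΦ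
  have nv : ∀ k < n + 1, ‖v k‖ ≤ Λ := by
    intro k hk
    have h0 := sub_pos.2 (G.lt k hk)
    have := G.inc k hk
    simp only [hv]
    rw [norm_smul, norm_inv, Real.norm_of_nonneg h0.le, inv_mul_le_iff₀ h0]
    linarith
  have step : ∀ k < n, Sdef B f t w k ≤ τ ^ 2 * (Φ (k+1) - Φ k) := by
    intro k hk
    have h1 := step_est S (G.mem (k := k) (by omega)).1 (G.lt k (by omega)) (G.lt (k+1) (by omega))
      (G.mem (k := k + 1 + 1) (by omega)).2 (hn (k := k) (by omega)) (hn (k := k+1) (by omega))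
      (hn (k := k+1+1) (by omega)) (G.inc k (by omega)) (G.inc (k+1) (by omega)) (by
        have a1 := G.stab (k+1+1) (by omega) (w (k+1) - w k)
        have a2 := G.diss k (by omega)
        rw [sub_apply]
        linarith)
    have h0 := sub_pos.2 (G.lt k (by omega))
    have e : Φ (k+1) - Φ k = ((1 / 2 * H (w (k+1+1)) (v (k+1)) (v (k+1)) - 1 / 2 * H (w (k+1)) (v k) (v k))
        + Λ * (ω (t (k+1+1)) - ω (t k)) + 2 * C * Λ ^ 3 * (t (k+1+1) - t k)) := by
      simp only [hΦ]; ring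
    have h2 : Sdef B f t w k ≤ (t (k+1) - t k) ^ 2 * (Φ (k+1) - Φ k) := by rw [e]; exact h1
    have h3 := G.S_nonneg (k := k) (by omega)
    have h4 : 0 ≤ Φ (k+1) - Φ k := by
      have : 0 ≤ (t (k+1) - t k) ^ 2 * (Φ (k+1) - Φ k) := h3.trans h2
      exact nonneg_of_mul_nonneg_right this (by positivity)
    refine h2.trans (mul_le_mul_of_nonneg_right ?_ h4)
    have := G.le k (by omega)
    gcongr
  have hsum : ∑ k ∈ Finset.range n, Sdef B f t w k ≤ τ ^ 2 * (Φ n - Φ 0) := by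
    rw [← Finset.sum_range_sub, Finset.mul_sum]
    exact Finset.sum_le_sum fun k hk => step k (Finset.mem_range.1 hk)
  have hωm : ∀ k ≤ n + 1, ω 0 ≤ ω (t k) ∧ ω (t k) ≤ ω T := fun k hk =>
    ⟨S.ω_mono le_rfl (G.mem hk).1 (G.mem hk).2, S.ω_mono (G.mem hk).1 (G.mem hk).2 le_rfl⟩
  have hΦn : Φ n ≤ 1 / 2 * M * Λ ^ 2 + 2 * Λ * ω T + 4 * C * Λ ^ 3 * T := by
    have h1 : H (w (n+1)) (v n) (v n) ≤ M * Λ ^ 2 := by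
      refine (le_abs_self _).trans (((H (w (n+1))).le_opNorm₂ (v n) (v n)).trans ?_)
      have := S.bdH _ (hn (k := n+1) le_rfl)
      have := nv n (by omega)
      rw [mul_assoc, sq]
      gcongr
    have h2 := (hωm (n+1) le_rfl).2
    have h3 := (hωm n (by omega)).2
    have h4 := (G.mem (k := n+1) le_rfl).2
    have h5 := (G.mem (k := n) (by omega)).2
    have h6 : Λ * (ω (t (n+1)) + ω (t n)) ≤ Λ * (2 * ω T) := by gcongr; linarith
    have h7 : 2 * C * Λ ^ 3 * (t (n + 1) + t n) ≤ 2 * C * Λ ^ 3 * (2 * T) := by gcongr; linarith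
    simp only [hΦ]
    linarith
  have hΦ0 : 2 * Λ * ω 0 ≤ Φ 0 := by
    have h1 : 0 ≤ H (w (0+1)) (v 0) (v 0) := (mul_nonneg S.κ_pos.le (sq_nonneg _)).trans (S.coer _ _)
    have h2 := (hωm (0+1) (by omega)).1
    have h3 := (hωm 0 (by omega)).1
    have h4 := (G.mem (k := 0+1) (by omega)).1
    have h5 := (G.mem (k := 0) (by omega)).1
    have h6 : Λ * (2 * ω 0) ≤ Λ * (ω (t (0+1)) + ω (t 0)) := by gcongr; linarith
    have h7 : 0 ≤ 2 * C * Λ ^ 3 * (t (0 + 1) + t 0) := by positivity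
    simp only [hΦ]
    linarith
  have hlast : Sdef B f t w n ≤ L * Λ * τ ^ 2 := by
    have h0 := sub_pos.2 (G.lt n (by omega))
    have h1 := strong_mono S.der S.coer (w (n+1)) (w n)
    have h2 : 0 ≤ κ * ‖w (n+1) - w n‖ ^ 2 := mul_nonneg S.κ_pos.le (sq_nonneg _)
    have e : Sdef B f t w n = (f (t (n+1)) - f (t n)) (w (n+1) - w n) - (B (w (n+1)) - B (w n)) (w (n+1) - w n) := by
      simp only [Sdef, sub_apply]; ring
    have h3 : (f (t (n+1)) - f (t n)) (w (n+1) - w n) ≤ (L * τ) * (Λ * τ) := by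
      refine (le_abs_self _).trans (((f (t (n+1)) - f (t n)).le_opNorm (w (n+1) - w n)).trans ?_)
      have a1 := S.lipf _ (G.mem (k := n+1) le_rfl) _ (G.mem (k := n) (by omega))
      rw [abs_of_pos h0] at a1
      have a2 := G.inc n (by omega)
      have a3 := G.le n (by omega)
      have a4 := mul_le_mul_of_nonneg_left a3 hL
      have a5 := mul_le_mul_of_nonneg_left a3 hΛ
      exact mul_le_mul (a1.trans a4) (a2.trans a5) (norm_nonneg _) (by positivity)
    rw [e]
    nlinarith
  rw [Finset.sum_range_succ]
  have : τ ^ 2 * (Φ n - Φ 0) ≤ τ ^ 2 * (1 / 2 * M * Λ ^ 2 + 2 * Λ * ω T + 4 * C * Λ ^ 3 * T - 2 * Λ * ω 0) := by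
    gcongr
  unfold cK1
  linarith

end discrete


/-! ### Step functions -/

section stepfun

variable {E : Type*} [NormedAddCommGroup E] [NormedSpace ℝ E]

/-- Step function with value `c k` on `(t k, t (k+1)]`, `k < N`. -/
def stepf (N : ℕ) (t : ℕ → ℝ) (c : ℕ → E) (s : ℝ) : E :=
  ∑ k ∈ Finset.range N, (Set.Ioc (t k) (t (k + 1))).indicator (fun _ => c k) s

lemma stepf_mono {N : ℕ} {t : ℕ → ℝ} (ht : ∀ k < N, t k < t (k + 1)) {k l : ℕ} (hkl : k ≤ l)
    (hl : l ≤ N) : t k ≤ t l := by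
  induction l, hkl using Nat.le_induction with
  | base => exact le_rfl
  | succ l h ih => exact (ih (by omega)).trans (ht l (by omega)).le

lemma stepf_apply {N : ℕ} {t : ℕ → ℝ} (ht : ∀ k < N, t k < t (k + 1)) (c : ℕ → E) {k : ℕ}
    (hk : k < N) {s : ℝ} (hs : s ∈ Set.Ioc (t k) (t (k + 1))) : stepf N t c s = c k := by
  unfold stepf
  rw [Finset.sum_eq_single k]
  · exact Set.indicator_of_mem hs _
  · intro l hl hlk
    refine Set.indicator_of_notMem (fun hsl => ?_) _
    have hl := Finset.mem_range.1 hl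
    rcases lt_or_gt_of_ne hlk with h | h
    · have := stepf_mono ht (show l + 1 ≤ k by omega) hk.le
      linarith [hs.1, hsl.2]
    · have := stepf_mono ht (show k + 1 ≤ l by omega) hl.le
      linarith [hs.2, hsl.1]
  · intro h; exact absurd (Finset.mem_range.2 hk) h

lemma stepf_locate {N : ℕ} {t : ℕ → ℝ} {s : ℝ} (hs : s ∈ Set.Ioc (t 0) (t N)) :
    ∃ k < N, s ∈ Set.Ioc (t k) (t (k + 1)) := by
  induction N with
  | zero => exact absurd hs (by simp)
  | succ n ih =>
    rcases le_or_gt s (t n) with h | h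
    · obtain ⟨k, hk, h2⟩ := ih ⟨hs.1, h⟩
      exact ⟨k, by omega, h2⟩
    · exact ⟨n, by omega, h, hs.2⟩

lemma stepf_cases {N : ℕ} {t : ℕ → ℝ} (ht : ∀ k < N, t k < t (k + 1)) (c : ℕ → E) (s : ℝ) :
    stepf N t c s = 0 ∨ ∃ k < N, stepf N t c s = c k := by
  by_cases h : ∃ k < N, s ∈ Set.Ioc (t k) (t (k + 1))
  · obtain ⟨k, hk, h⟩ := h
    exact Or.inr ⟨k, hk, stepf_apply ht c hk h⟩
  · left
    push Not at h
    exact Finset.sum_eq_zero fun k hk => Set.indicator_of_notMem (h k (Finset.mem_range.1 hk)) _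

lemma stepf_sm (N : ℕ) (t : ℕ → ℝ) (c : ℕ → E) : StronglyMeasurable (stepf N t c) := by
  unfold stepf
  refine Finset.stronglyMeasurable_fun_sum _ fun k _ => ?_
  exact (stronglyMeasurable_const).indicator measurableSet_Ioc

lemma stepf_int (N : ℕ) (t : ℕ → ℝ) (c : ℕ → E) (a b : ℝ) :
    IntervalIntegrable (stepf N t c) volume a b := by
  rw [intervalIntegrable_iff]
  unfold stepf
  refine integrable_finsetSum _ fun k _ => ?_
  have : IntegrableOn (fun _ : ℝ => c k) (Set.uIoc a b) volume := by
    refine integrableOn_const ?_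
    simp [Set.uIoc]
  exact this.indicator measurableSet_Ioc

lemma stepf_integral [CompleteSpace E] {N : ℕ} {t : ℕ → ℝ} (ht : ∀ k < N, t k < t (k + 1)) (c : ℕ → E) {k : ℕ}
    (hk : k < N) {s : ℝ} (hs : s ∈ Set.Icc (t k) (t (k + 1))) :
    ∫ x in (t k)..s, stepf N t c x = (s - t k) • c k := by
  rw [← intervalIntegral.integral_const]
  refine intervalIntegral.integral_congr_ae (Filter.Eventually.of_forall fun x hx => ?_)
  rw [Set.uIoc_of_le hs.1] at hx
  exact stepf_apply ht c hk ⟨hx.1, hx.2.trans hs.2⟩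

lemma stepf_integral_grid [CompleteSpace E] {N : ℕ} {t : ℕ → ℝ} (ht : ∀ k < N, t k < t (k + 1)) (c : ℕ → E) {k : ℕ}
    (hk : k ≤ N) :
    ∫ x in (t 0)..(t k), stepf N t c x = ∑ i ∈ Finset.range k, (t (i + 1) - t i) • c i := by
  induction k with
  | zero => simp
  | succ k ih =>
    rw [Finset.sum_range_succ, ← ih (by omega),
      ← stepf_integral ht c (show k < N by omega) ⟨(ht k (by omega)).le, le_rfl⟩,
      intervalIntegral.integral_add_adjacent_intervals (stepf_int _ _ _ _ _) (stepf_int _ _ _ _ _)]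

end stepfun

/-- Approximate differential solutions. -/
structure Approx (B : Z → Z →L[ℝ] ℝ) (j : Z → ℝ) (f : ℝ → Z →L[ℝ] ℝ) (Λ T ε b : ℝ) (z₀ : Z)
    (u v : ℝ → Z) (q : ℝ → ℝ) : Prop where
  v_sm : StronglyMeasurable v
  v_bd : ∀ s, ‖v s‖ ≤ Λ
  v_int : ∀ a b, IntervalIntegrable v volume a b
  u_eq : ∀ s, u s = z₀ + ∫ x in (0:ℝ)..s, v x
  q_int : IntervalIntegrable q volume 0 T
  q_nn : ∀ s, 0 ≤ q s
  q_le : ∫ x in (0:ℝ)..T, q x ≤ b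
  main : ∀ s ∈ Set.Ioo (0:ℝ) T, ∃ σ : Z →L[ℝ] ℝ, ∃ a e : ℝ, (∀ x, σ x ≤ j x) ∧ 0 ≤ a ∧
    j (v s) ≤ σ (v s) + a ∧ ‖σ - (f s - B (u s))‖ ≤ e ∧ e ≤ ε ∧ a + 2 * Λ * e ≤ q s

/-- Consistency constant. -/
def cK3 (ω : ℝ → ℝ) (C Λ T : ℝ) : ℝ := 2 * C * Λ ^ 2 * T + 2 * (ω T - ω 0)

/-- Constant in the integrated defect. -/
def cK2 (ω : ℝ → ℝ) (C M L Λ T : ℝ) : ℝ :=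
  cK1 ω C M L Λ T + 2 * Λ * cK3 ω C Λ T

section approx

variable {B : Z → Z →L[ℝ] ℝ} {H : Z → Z →L[ℝ] Z →L[ℝ] ℝ} {j : Z → ℝ}
    {f f' : ℝ → Z →L[ℝ] ℝ} {ω : ℝ → ℝ} {κ C M r L Λ ρ T τ : ℝ} {z₀ : Z} {N : ℕ} {t : ℕ → ℝ} {w : ℕ → Z}

/-- local consistency on one interval -/
lemma consist (S : Setting B H j f f' ω κ C M r L Λ ρ T) {a b s : ℝ} (ha : 0 ≤ a) (hab : a < b)
    (hb : b ≤ T) (hs : s ∈ Set.Icc a b) {x y v : Z} (hx : ‖x‖ ≤ r) (hy : ‖y‖ ≤ r)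
    (hv : y = x + (b - a) • v) (nv : ‖v‖ ≤ Λ) :
    ‖(f a - B x) + ((s - a) / (b - a)) • ((f b - B y) - (f a - B x))
      - (f s - B (x + (s - a) • v))‖ ≤ 2 * C * Λ ^ 2 * (b - a) ^ 2 + 2 * (b - a) * (ω b - ω a) := by
  set h := b - a with hh
  have h0 : 0 < h := by linarith
  set θ := (s - a) / h with hθ
  have eθ : s - a = θ * h := by rw [hθ]; field_simp
  have θ0 : 0 ≤ θ := div_nonneg (by linarith [hs.1]) h0.le
  have θ1 : θ ≤ 1 := by rw [hθ, div_le_one h0]; linarith [hs.2]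
  have hC := S.C_nn
  have hΛ := S.Λ_nn
  set u := x + (s - a) • v with hu
  have eu : u = (1 - θ) • x + θ • y := by
    rw [hu, hv, eθ]; module
  have nu : ‖u‖ ≤ r := by
    rw [eu]
    refine (norm_add_le _ _).trans ?_
    rw [norm_smul, norm_smul, Real.norm_of_nonneg θ0, Real.norm_of_nonneg (by linarith)]
    nlinarith
  have hω := S.ω_mono ha hab.le hb
  have l1 := S.mean_der ha hb (p := a) (x := a) (y := s) ⟨le_rfl, hab.le⟩ ⟨le_rfl, hab.le⟩ hs
  have l2 := S.mean_der ha hb (p := a) (x := a) (y := b) ⟨le_rfl, hab.le⟩ ⟨le_rfl, hab.le⟩ ⟨hab.le, le_rfl⟩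
  have t1 := taylor_bound hC S.der S.lipH nu hx
  have t2 := taylor_bound hC S.der S.lipH hy hx
  have e1 : u - x = (s - a) • v := by rw [hu]; abel
  have e2 : y - x = h • v := by rw [hv]; abel
  have hsh : s - a ≤ h := by linarith [hs.2]
  have hs0 : 0 ≤ s - a := by linarith [hs.1]
  rw [abs_of_nonneg hs0] at l1
  rw [abs_of_pos h0] at l2
  have b1 : ‖f s - f a - (s - a) • f' a‖ ≤ h * (ω b - ω a) := by
    refine l1.trans ?_
    nlinarith
  have b2 : ‖f b - f a - h • f' a‖ ≤ h * (ω b - ω a) := by linarith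
  have nx : ∀ c, 0 ≤ c → c ≤ h → C * ‖c • v‖ ^ 2 ≤ C * Λ ^ 2 * h ^ 2 := by
    intro c hc hch
    rw [norm_smul, Real.norm_of_nonneg hc, mul_assoc, ← mul_pow, mul_comm Λ h]
    gcongr
  rw [e1] at t1
  rw [e2] at t2
  have b3 := t1.trans (nx _ hs0 hsh)
  have b4 := t2.trans (nx _ h0.le le_rfl)
  have key : (f a - B x) + θ • ((f b - B y) - (f a - B x)) - (f s - B u)
      = (θ • (f b - f a - h • f' a) - (f s - f a - (s - a) • f' a))
        + ((B u - B x - H x ((s - a) • v)) - θ • (B y - B x - H x (h • v))) := by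
    rw [map_smul, map_smul, eθ]
    module
  rw [key]
  have sm : ∀ (g : Z →L[ℝ] ℝ) (c : ℝ), ‖g‖ ≤ c → ‖θ • g‖ ≤ c := by
    intro g c hg
    rw [norm_smul, Real.norm_of_nonneg θ0]
    nlinarith [norm_nonneg g]
  refine (norm_add_le _ _).trans ?_
  have r1 := norm_sub_le (θ • (f b - f a - h • f' a)) (f s - f a - (s - a) • f' a)
  have r2 := norm_sub_le (B u - B x - H x ((s - a) • v)) (θ • (B y - B x - H x (h • v)))
  have r3 := sm _ _ b2
  have r4 := sm _ _ b4
  linarith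

end approx


section approx

variable {B : Z → Z →L[ℝ] ℝ} {H : Z → Z →L[ℝ] Z →L[ℝ] ℝ} {j : Z → ℝ}
    {f f' : ℝ → Z →L[ℝ] ℝ} {ω : ℝ → ℝ} {κ C M r L Λ ρ T τ : ℝ} {z₀ : Z} {N : ℕ} {t : ℕ → ℝ} {w : ℕ → Z}

lemma Grid.approx (S : Setting B H j f f' ω κ C M r L Λ ρ T) (G : Grid B j f Λ T τ z₀ N t w)
    (hr : ‖z₀‖ + Λ * T ≤ r) :
    ∃ u v q, Approx B j f Λ T (cK3 ω C Λ T * τ) (cK2 ω C M L Λ T * τ ^ 2) z₀ u v q ∧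
      ∀ k < N, ∀ s ∈ Set.Icc (t k) (t (k+1)), ‖u s - w k‖ ≤ Λ * τ := by
  have hΛ := S.Λ_nn
  have hC := S.C_nn
  have hT := S.T_pos
  have hτ := G.τ_pos
  have hn := fun {k : ℕ} (hk : k ≤ N) => G.norm_le hΛ hr hk
  set h : ℕ → ℝ := fun k => t (k+1) - t k with hh
  have h0 : ∀ k < N, 0 < h k := fun k hk => sub_pos.2 (G.lt k hk)
  have hτ' : ∀ k < N, h k ≤ τ := fun k hk => G.le k hk
  have hhT : ∀ k < N, h k ≤ T := fun k hk => by
    have h1 := (G.mem (k := k+1) hk).2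
    have h2 := (G.mem (k := k) hk.le).1
    simp only [hh]; linarith
  set vk : ℕ → Z := fun k => (h k)⁻¹ • (w (k + 1) - w k) with hvk
  have ev : ∀ k < N, h k • vk k = w (k+1) - w k := fun k hk => by
    simp only [hvk]; rw [smul_inv_smul₀ (h0 k hk).ne']
  have nv : ∀ k < N, ‖vk k‖ ≤ Λ := by
    intro k hk
    have := G.inc k hk
    simp only [hvk]
    rw [norm_smul, norm_inv, Real.norm_of_nonneg (h0 k hk).le, inv_mul_le_iff₀ (h0 k hk)]
    simp only [hh]
    linarith
  set Δ : ℕ → ℝ := fun k => ω (t (k+1)) - ω (t k) with hΔ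
  have Δ0 : ∀ k < N, 0 ≤ Δ k := fun k hk =>
    sub_nonneg.2 (S.ω_mono (G.mem (k := k) hk.le).1 (G.lt k hk).le (G.mem (k := k+1) hk).2)
  have ΔT : ∀ k < N, Δ k ≤ ω T - ω 0 := fun k hk => by
    have h1 := S.ω_mono (G.mem (k := k+1) hk).1 (G.mem (k := k+1) hk).2 le_rfl
    have h2 := S.ω_mono le_rfl (G.mem (k := k) hk.le).1 (G.mem (k := k) hk.le).2
    simp only [hΔ]; linarith
  set e : ℕ → ℝ := fun k => 2 * C * Λ ^ 2 * h k ^ 2 + 2 * h k * Δ k with he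
  have e0 : ∀ k < N, 0 ≤ e k := fun k hk => by
    have := (h0 k hk).le
    have := Δ0 k hk
    simp only [he]; positivity
  set qk : ℕ → ℝ := fun k => Sdef B f t w k / h k + 2 * Λ * e k with hqk
  have q0 : ∀ k < N, 0 ≤ qk k := fun k hk => by
    have a1 := div_nonneg (G.S_nonneg hk) (h0 k hk).le
    have a2 := mul_nonneg (mul_nonneg two_pos.le hΛ) (e0 k hk)
    simp only [hqk]; linarith
  have hu : ∀ k < N, ∀ s ∈ Set.Icc (t k) (t (k+1)),
      z₀ + ∫ x in (0:ℝ)..s, stepf N t vk x = w k + (s - t k) • vk k := by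
    have hgrid : ∀ k ≤ N, z₀ + ∫ x in (0:ℝ)..(t k), stepf N t vk x = w k := by
      intro k hk
      rw [← G.t0, stepf_integral_grid G.lt vk hk]
      have : ∑ i ∈ Finset.range k, (t (i + 1) - t i) • vk i = ∑ i ∈ Finset.range k, (w (i+1) - w i) :=
        Finset.sum_congr rfl fun i hi => ev i (by have := Finset.mem_range.1 hi; omega)
      rw [this, Finset.sum_range_sub, G.w0]
      abel
    intro k hk s hs
    rw [← intervalIntegral.integral_add_adjacent_intervals (b := t k) (stepf_int _ _ _ _ _) (stepf_int _ _ _ _ _),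
      ← add_assoc, hgrid k hk.le, stepf_integral G.lt vk hk hs]
  refine ⟨fun s => z₀ + ∫ x in (0:ℝ)..s, stepf N t vk x, stepf N t vk, stepf N t qk,
    ⟨stepf_sm _ _ _, ?_, fun a b => stepf_int _ _ _ _ _, fun s => rfl, stepf_int _ _ _ _ _, ?_, ?_, ?_⟩, ?_⟩
  · intro s
    rcases stepf_cases G.lt vk s with h1 | ⟨k, hk, h1⟩
    · rw [h1, norm_zero]; exact hΛ
    · rw [h1]; exact nv k hk
  · intro s
    rcases stepf_cases G.lt qk s with h1 | ⟨k, hk, h1⟩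
    · rw [h1]
    · rw [h1]; exact q0 k hk
  · have e1 := stepf_integral_grid G.lt qk le_rfl
    rw [G.t0, G.tN] at e1
    rw [e1]
    have b1 : ∀ k ∈ Finset.range N, (t (k+1) - t k) • qk k ≤ Sdef B f t w k
        + 2 * Λ * τ ^ 2 * (2 * C * Λ ^ 2 * (t (k+1) - t k) + 2 * (ω (t (k+1)) - ω (t k))) := by
      intro k hk
      have hk := Finset.mem_range.1 hk
      have a0 := h0 k hk
      have a1 := hτ' k hk
      have a2 := Δ0 k hk
      change h k • qk k ≤ Sdef B f t w k + 2 * Λ * τ ^ 2 * (2 * C * Λ ^ 2 * h k + 2 * Δ k)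
      have : h k • qk k = Sdef B f t w k + 2 * Λ * h k ^ 2 * (2 * C * Λ ^ 2 * h k + 2 * Δ k) := by
        simp only [hqk, he, smul_eq_mul]
        field_simp
      rw [this]
      gcongr
    refine (Finset.sum_le_sum b1).trans ?_
    rw [Finset.sum_add_distrib, ← Finset.mul_sum, Finset.sum_add_distrib, ← Finset.mul_sum, ← Finset.mul_sum,
      Finset.sum_range_sub, Finset.sum_range_sub (fun k => ω (t k)), G.t0, G.tN]
    have := G.sum_S S hr
    unfold cK2 cK3
    linarith
  · intro s hs
    obtain ⟨k, hk, hsk⟩ := stepf_locate (N := N) (t := t) (s := s) (by rw [G.t0, G.tN]; exact ⟨hs.1, hs.2.le⟩)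
    have hsI : s ∈ Set.Icc (t k) (t (k+1)) := ⟨hsk.1.le, hsk.2⟩
    rw [stepf_apply G.lt vk hk hsk, stepf_apply G.lt qk hk hsk]
    change ∃ σ : Z →L[ℝ] ℝ, ∃ a e : ℝ, (∀ x, σ x ≤ j x) ∧ 0 ≤ a ∧ j (vk k) ≤ σ (vk k) + a ∧
      ‖σ - (f s - B (z₀ + ∫ x in (0:ℝ)..s, stepf N t vk x))‖ ≤ e ∧ _
    rw [hu k hk s hsI]
    have a0 := h0 k hk
    have θ0 : 0 ≤ (s - t k) / h k := div_nonneg (by linarith [hsI.1]) a0.le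
    have θ1 : (s - t k) / h k ≤ 1 := by rw [div_le_one a0]; simp only [hh]; linarith [hsI.2]
    have hv' : w (k+1) = w k + (t (k+1) - t k) • vk k := by
      have := ev k hk
      simp only [hh] at this
      rw [this]; abel
    refine ⟨(f (t k) - B (w k)) + ((s - t k) / (t (k+1) - t k)) • ((f (t (k+1)) - B (w (k+1))) - (f (t k) - B (w k))),
      Sdef B f t w k / h k, e k, ?_, div_nonneg (G.S_nonneg hk) a0.le, ?_, ?_, ?_, le_rfl⟩
    · intro x
      change (f (t k) - B (w k)) x + ((s - t k) / h k) * ((f (t (k+1)) - B (w (k+1))) x - (f (t k) - B (w k)) x) ≤ _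
      have b1 := G.stab k hk.le x
      have b2 := G.stab (k+1) hk x
      nlinarith
    · have c1 := S.j_smul (h k)⁻¹ (w (k+1) - w k) (inv_nonneg.2 a0.le)
      have c2 := G.diss k hk
      have c3 : Sdef B f t w k / h k = ((f (t (k+1)) - B (w (k+1))) - (f (t k) - B (w k))) (vk k) := by
        simp only [Sdef, hvk, map_smul, smul_eq_mul]
        rw [div_eq_inv_mul]
      have c4 : j (vk k) ≤ (f (t (k+1)) - B (w (k+1))) (vk k) := by
        simp only [hvk]
        rw [c1, map_smul, smul_eq_mul]
        exact mul_le_mul_of_nonneg_left c2 (inv_nonneg.2 a0.le)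
      have c5 := div_nonneg (G.S_nonneg hk) a0.le
      rw [c3] at c5 ⊢
      change _ ≤ (f (t k) - B (w k)) (vk k) + ((s - t k) / h k) *
        ((f (t (k+1)) - B (w (k+1))) - (f (t k) - B (w k))) (vk k) + _
      have c6 := mul_nonneg θ0 c5
      rw [sub_apply (f (t (k+1)) - B (w (k+1)))] at c5 c6 ⊢
      linarith
    · exact consist S (G.mem (k := k) hk.le).1 (G.lt k hk) (G.mem (k := k+1) hk).2 hsI (hn hk.le) (hn hk) hv' (nv k hk)
    · have a1 := hτ' k hk
      have a2 := hhT k hk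
      have a3 := Δ0 k hk
      have a4 := ΔT k hk
      have b1 : 2 * C * Λ ^ 2 * h k ^ 2 ≤ 2 * C * Λ ^ 2 * (T * τ) := by
        rw [sq (h k)]; gcongr
      have b2 : 2 * h k * Δ k ≤ 2 * τ * (ω T - ω 0) := by gcongr
      simp only [he]
      unfold cK3
      linarith
  · intro k hk s hs
    change ‖(z₀ + ∫ x in (0:ℝ)..s, stepf N t vk x) - w k‖ ≤ _
    rw [hu k hk s hs, add_sub_cancel_left, norm_smul, Real.norm_of_nonneg (by linarith [hs.1]), mul_comm]
    have a1 := hτ' k hk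
    simp only [hh] at a1
    refine mul_le_mul (nv k hk) ?_ (by linarith [hs.1]) hΛ
    linarith [hs.2]

end approx


section limit

variable {B : Z → Z →L[ℝ] ℝ} {H : Z → Z →L[ℝ] Z →L[ℝ] ℝ} {j : Z → ℝ}
    {f f' : ℝ → Z →L[ℝ] ℝ} {ω : ℝ → ℝ} {κ C M r L Λ ρ T : ℝ} {z₀ : Z}

lemma Approx.norm_le {ε b : ℝ} {u v : ℝ → Z} {q : ℝ → ℝ} (A : Approx B j f Λ T ε b z₀ u v q)
    (hΛ : 0 ≤ Λ) (hr : ‖z₀‖ + Λ * T ≤ r) {s : ℝ} (hs : s ∈ Set.Icc (0:ℝ) T) : ‖u s‖ ≤ r := by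
  rw [A.u_eq]
  have h1 := intervalIntegral.norm_integral_le_of_norm_le_const (a := 0) (b := s) (C := Λ) (f := v)
    (fun x _ => A.v_bd x)
  rw [sub_zero, abs_of_nonneg hs.1] at h1
  have h2 := mul_le_mul_of_nonneg_left hs.2 hΛ
  have := norm_add_le z₀ (∫ x in (0:ℝ)..s, v x)
  linarith

/-- Stability constant. -/
def cE (κ C Λ T : ℝ) : ℝ := Real.exp (C / κ * (2 * Λ * T))

lemma Approx.compare (S : Setting B H j f f' ω κ C M r L Λ ρ T) (hr : ‖z₀‖ + Λ * T ≤ r)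
    {ε₁ b₁ ε₂ b₂ : ℝ} {u₁ v₁ u₂ v₂ : ℝ → Z} {q₁ q₂ : ℝ → ℝ}
    (A₁ : Approx B j f Λ T ε₁ b₁ z₀ u₁ v₁ q₁) (A₂ : Approx B j f Λ T ε₂ b₂ z₀ u₂ v₂ q₂)
    {s : ℝ} (hs : s ∈ Set.Icc (0:ℝ) T) :
    κ * ‖u₁ s - u₂ s‖ ^ 2 ≤ 2 * (b₁ + b₂) * cE κ C Λ T := by
  have hΛ := S.Λ_nn
  have hT := S.T_pos
  have hC := S.C_nn
  have hκ := S.κ_pos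
  have hg := gronwall_compare hT.le S.κ_pos S.C_nn S.der S.coer S.sym S.lipH S.bdH
    (A₁.v_int 0 T) (A₂.v_int 0 T) (A₁.q_int.add A₂.q_int) (fun s => add_nonneg (A₁.q_nn s) (A₂.q_nn s))
    (fun s _ => A₁.u_eq s) (fun s _ => A₂.u_eq s) (fun s hs => A₁.norm_le hΛ hr hs)
    (fun s hs => A₂.norm_le hΛ hr hs) (by
      refine (ae_restrict_iff' measurableSet_Ioo).2 (Filter.Eventually.of_forall fun s hs => ?_)
      obtain ⟨σ₁, a₁, e₁, k₁, -, d₁, n₁, -, l₁⟩ := A₁.main s hs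
      obtain ⟨σ₂, a₂, e₂, k₂, -, d₂, n₂, -, l₂⟩ := A₂.main s hs
      have c1 := k₂ (v₁ s)
      have c2 := k₁ (v₂ s)
      have nv : ‖v₁ s - v₂ s‖ ≤ 2 * Λ := (norm_sub_le _ _).trans (by linarith [A₁.v_bd s, A₂.v_bd s])
      have e : (B (u₁ s) - B (u₂ s)) (v₁ s - v₂ s) = (σ₂ - σ₁) (v₁ s - v₂ s)
          + (σ₁ - (f s - B (u₁ s))) (v₁ s - v₂ s) - (σ₂ - (f s - B (u₂ s))) (v₁ s - v₂ s) := by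
        simp only [sub_apply]; ring
      have b1 : |(σ₁ - (f s - B (u₁ s))) (v₁ s - v₂ s)| ≤ e₁ * (2 * Λ) :=
        (ContinuousLinearMap.le_opNorm (σ₁ - (f s - B (u₁ s))) (v₁ s - v₂ s)).trans
          (mul_le_mul n₁ nv (norm_nonneg _) ((norm_nonneg _).trans n₁))
      have b2 : |(σ₂ - (f s - B (u₂ s))) (v₁ s - v₂ s)| ≤ e₂ * (2 * Λ) :=
        (ContinuousLinearMap.le_opNorm (σ₂ - (f s - B (u₂ s))) (v₁ s - v₂ s)).trans
          (mul_le_mul n₂ nv (norm_nonneg _) ((norm_nonneg _).trans n₂))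
      have b3 : (σ₂ - σ₁) (v₁ s - v₂ s) ≤ a₁ + a₂ := by
        simp only [sub_apply, map_sub]; linarith
      rw [e]
      have := (abs_le.1 b1).2
      have := (abs_le.1 b2).1
      change _ ≤ q₁ s + q₂ s
      linarith) s hs
  refine hg.trans ?_
  have i1 : ∫ x in (0:ℝ)..T, (q₁ x + q₂ x) ≤ b₁ + b₂ := by
    rw [intervalIntegral.integral_add A₁.q_int A₂.q_int]
    exact add_le_add A₁.q_le A₂.q_le
  have i0 : 0 ≤ ∫ x in (0:ℝ)..T, (q₁ x + q₂ x) :=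
    intervalIntegral.integral_nonneg hT.le fun x _ => add_nonneg (A₁.q_nn x) (A₂.q_nn x)
  have i2 : ∫ x in (0:ℝ)..T, (‖v₁ x‖ + ‖v₂ x‖) ≤ 2 * Λ * T := by
    have := intervalIntegral.integral_mono_on hT.le ((A₁.v_int 0 T).norm.add (A₂.v_int 0 T).norm)
      (intervalIntegrable_const (c := 2 * Λ)) (fun x _ => by
        change ‖v₁ x‖ + ‖v₂ x‖ ≤ _
        linarith [A₁.v_bd x, A₂.v_bd x])
    rw [intervalIntegral.integral_const, sub_zero, smul_eq_mul] at this
    linarith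
  unfold cE
  have i3 : C / κ * ∫ x in (0:ℝ)..T, (‖v₁ x‖ + ‖v₂ x‖) ≤ C / κ * (2 * Λ * T) := by gcongr
  have i4 := Real.exp_le_exp.2 i3
  exact mul_le_mul (by linarith) i4 (Real.exp_pos _).le (by linarith)

/-- The limit of the approximations. -/
lemma exists_limit (S : Setting B H j f f' ω κ C M r L Λ ρ T) (hr : ‖z₀‖ + Λ * T ≤ r) (c2 c3 : ℝ)
    (hA : ∀ τ : ℝ, 0 < τ → ∃ u v q, Approx B j f Λ T (c3 * τ) (c2 * τ ^ 2) z₀ u v q) :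
    ∃ y : ℝ → Z, ∃ K : ℝ, 0 ≤ K ∧ ∀ τ : ℝ, 0 < τ → ∀ u v q,
      Approx B j f Λ T (c3 * τ) (c2 * τ ^ 2) z₀ u v q → ∀ s ∈ Set.Icc (0:ℝ) T, ‖u s - y s‖ ≤ K * τ := by
  have hT := S.T_pos
  have hκ := S.κ_pos
  have hc2 : 0 ≤ c2 := by
    obtain ⟨u, v, q, A⟩ := hA 1 one_pos
    have := A.q_le
    have h1 := intervalIntegral.integral_nonneg (μ := volume) hT.le fun x _ => A.q_nn x
    linarith
  set P := 2 * c2 * cE κ C Λ T / κ with hP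
  have hE : 0 < cE κ C Λ T := Real.exp_pos _
  have hP0 : 0 ≤ P := by positivity
  have hcmp : ∀ τ τ' : ℝ, 0 < τ → 0 < τ' → ∀ u v q u' v' q',
      Approx B j f Λ T (c3 * τ) (c2 * τ ^ 2) z₀ u v q →
      Approx B j f Λ T (c3 * τ') (c2 * τ' ^ 2) z₀ u' v' q' →
      ∀ s ∈ Set.Icc (0:ℝ) T, ‖u s - u' s‖ ≤ Real.sqrt P * (τ + τ') := by
    intro τ τ' hτ hτ' u v q u' v' q' A A' s hs
    have h1 := A.compare S hr A' hs
    have h2 : ‖u s - u' s‖ ^ 2 ≤ P * (τ ^ 2 + τ' ^ 2) := by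
      rw [hP, div_mul_eq_mul_div, le_div_iff₀ hκ]
      linarith
    have h3 : ‖u s - u' s‖ ^ 2 ≤ (Real.sqrt P * (τ + τ')) ^ 2 := by
      rw [mul_pow, Real.sq_sqrt hP0]
      refine h2.trans (mul_le_mul_of_nonneg_left ?_ hP0)
      nlinarith [mul_pos hτ hτ']
    exact le_of_sq_le_sq h3 (by positivity)
  have hA' : ∀ n : ℕ, ∃ u v q, Approx B j f Λ T (c3 * (1 / ((n:ℝ) + 1))) (c2 * (1 / ((n:ℝ) + 1)) ^ 2) z₀ u v q :=
    fun n => hA _ (by positivity)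
  choose U V' Q hU using hA'
  have hpos : ∀ n : ℕ, 0 < 1 / ((n:ℝ) + 1) := fun n => by positivity
  have hlim : Filter.Tendsto (fun n : ℕ => 1 / ((n:ℝ) + 1)) Filter.atTop (nhds 0) :=
    tendsto_one_div_add_atTop_nhds_zero_nat
  have hcau : ∀ s ∈ Set.Icc (0:ℝ) T, ∃ l, Filter.Tendsto (fun n => U n s) Filter.atTop (nhds l) := by
    intro s hs
    refine cauchySeq_tendsto_of_complete ?_
    refine cauchySeq_of_le_tendsto_0 (fun n : ℕ => 2 * Real.sqrt P * (1 / ((n:ℝ) + 1))) ?_ ?_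
    · intro n m k hn hm
      rw [dist_eq_norm]
      refine (hcmp _ _ (hpos n) (hpos m) _ _ _ _ _ _ (hU n) (hU m) s hs).trans ?_
      have a1 : 1 / ((n:ℝ) + 1) ≤ 1 / ((k:ℝ) + 1) := Nat.one_div_le_one_div hn
      have a2 : 1 / ((m:ℝ) + 1) ≤ 1 / ((k:ℝ) + 1) := Nat.one_div_le_one_div hm
      nlinarith [Real.sqrt_nonneg P]
    · simpa using hlim.const_mul (2 * Real.sqrt P)
  choose! y hy using hcau
  refine ⟨y, Real.sqrt P, Real.sqrt_nonneg _, ?_⟩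
  intro τ hτ u v q A s hs
  have h1 : Filter.Tendsto (fun n => ‖u s - U n s‖) Filter.atTop (nhds ‖u s - y s‖) :=
    (tendsto_const_nhds.sub (hy s hs)).norm
  have h2 : Filter.Tendsto (fun n : ℕ => Real.sqrt P * (τ + 1 / ((n:ℝ) + 1))) Filter.atTop
      (nhds (Real.sqrt P * τ)) := by
    simpa using (hlim.const_add τ).const_mul (Real.sqrt P)
  exact le_of_tendsto_of_tendsto' h1 h2 fun n => hcmp _ _ hτ (hpos n) _ _ _ _ _ _ A (hU n) s hs

end limit

/-- Decreasing sequences of nonempty bounded closed convex sets in a Hilbert space have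
nonempty intersection. -/
lemma convex_inter {E : Type*} [NormedAddCommGroup E] [InnerProductSpace ℝ E] [CompleteSpace E]
    (K : ℕ → Set E) (hne : ∀ n, (K n).Nonempty) (hcl : ∀ n, IsClosed (K n)) (hcv : ∀ n, Convex ℝ (K n))
    (hanti : ∀ n m, n ≤ m → K m ⊆ K n) (b : ℝ) (hb : ∀ n, ∀ x ∈ K n, ‖x‖ ≤ b) :
    ∃ x, ∀ n, x ∈ K n := by
  have hp : ∀ n, ∃ p ∈ K n, ∀ x ∈ K n, ‖p‖ ≤ ‖x‖ := by
    intro n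
    obtain ⟨p, hp, hmin⟩ := exists_norm_eq_iInf_of_complete_convex (hne n) (hcl n).isComplete (hcv n) 0
    refine ⟨p, hp, fun x hx => ?_⟩
    have h1 : ⨅ w : K n, ‖(0:E) - w‖ ≤ ‖(0:E) - x‖ :=
      ciInf_le ⟨0, by rintro _ ⟨w, rfl⟩; exact norm_nonneg _⟩ (⟨x, hx⟩ : K n)
    rw [← hmin] at h1
    simpa using h1
  choose p hpK hpmin using hp
  have hmono : Monotone fun n => ‖p n‖ ^ 2 := by
    intro n m hnm
    have := hpmin n (p m) (hanti n m hnm (hpK m))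
    have := norm_nonneg (p n)
    change ‖p n‖ ^ 2 ≤ ‖p m‖ ^ 2
    gcongr
  have hbdd : BddAbove (Set.range fun n => ‖p n‖ ^ 2) := by
    refine ⟨b ^ 2, ?_⟩
    rintro _ ⟨n, rfl⟩
    have := hb n _ (hpK n)
    have := norm_nonneg (p n)
    change ‖p n‖ ^ 2 ≤ b ^ 2
    gcongr
  have hconv := tendsto_atTop_ciSup hmono hbdd
  set l := ⨆ n, ‖p n‖ ^ 2 with hl
  have hle : ∀ n, ‖p n‖ ^ 2 ≤ l := fun n => le_ciSup hbdd n
  have hdist : ∀ n m, n ≤ m → ‖p n - p m‖ ^ 2 ≤ 2 * (l - ‖p n‖ ^ 2) := by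
    intro n m hnm
    have h1 := hcv n (hpK n) (hanti n m hnm (hpK m)) (show (0:ℝ) ≤ 1/2 by norm_num)
      (show (0:ℝ) ≤ 1/2 by norm_num) (by norm_num)
    have h2 := hpmin n _ h1
    rw [← smul_add, norm_smul] at h2
    norm_num at h2
    have h3 := parallelogram_law_with_norm ℝ (p n) (p m)
    have h4 := hle m
    have := norm_nonneg (p n)
    nlinarith
  have hcs : CauchySeq p := by
    refine cauchySeq_of_le_tendsto_0 (fun n => 2 * Real.sqrt (2 * (l - ‖p n‖ ^ 2))) ?_ ?_
    · intro n m k hn hm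
      have a1 := Real.le_sqrt_of_sq_le (hdist k n hn)
      have a2 := Real.le_sqrt_of_sq_le (hdist k m hm)
      have a3 := dist_triangle_left (p n) (p m) (p k)
      rw [dist_eq_norm (p k), dist_eq_norm (p k)] at a3
      linarith
    · have h1 : Filter.Tendsto (fun n => 2 * (l - ‖p n‖ ^ 2)) Filter.atTop (nhds (2 * (l - l))) :=
        (hconv.const_sub l).const_mul 2
      have h2 := ((Real.continuous_sqrt.tendsto _).comp h1).const_mul 2
      simpa using h2
  obtain ⟨x, hx⟩ := cauchySeq_tendsto_of_complete hcs
  refine ⟨x, fun n => (hcl n).mem_of_tendsto hx ?_⟩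
  filter_upwards [Filter.eventually_ge_atTop n] with m hm
  exact hanti n m hm (hpK m)


/-! ### Weak limits tested with convex integrands -/

lemma lp_l1 {α : Type*} [MeasurableSpace α] (μ : Measure α) [IsFiniteMeasure μ] :
    ∃ c : ℝ, 0 ≤ c ∧ ∀ x : Lp Z 2 μ, ∫ t, ‖x t‖ ∂μ ≤ c * ‖x‖ := by
  refine ⟨(μ Set.univ ^ (1 / (1:ENNReal).toReal - 1 / (2:ENNReal).toReal)).toReal, ENNReal.toReal_nonneg, fun x => ?_⟩
  have hx := Lp.aestronglyMeasurable x
  have h1 := eLpNorm_le_eLpNorm_mul_rpow_measure_univ (p := 1) (q := 2) (μ := μ) (by norm_num) hx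
  have hfin : (μ Set.univ ^ (1 / (1:ENNReal).toReal - 1 / (2:ENNReal).toReal)) ≠ ⊤ :=
    ENNReal.rpow_ne_top_of_nonneg (by norm_num) (measure_ne_top _ _)
  rw [integral_norm_eq_lintegral_enorm hx, ← eLpNorm_one_eq_lintegral_enorm, Lp.norm_def, mul_comm,
    ← ENNReal.toReal_mul]
  exact ENNReal.toReal_mono (ENNReal.mul_ne_top (Lp.eLpNorm_ne_top x) hfin) h1

lemma weak_limit {α : Type*} [MeasurableSpace α] (μ : Measure α) [IsFiniteMeasure μ] {V : ℕ → α → Z}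
    (hV : ∀ n, AEStronglyMeasurable (V n) μ) {Λ : ℝ} (hΛ : 0 ≤ Λ) (hbd : ∀ n s, ‖V n s‖ ≤ Λ) :
    ∃ v : α → Z, Integrable v μ ∧ ∀ (φ : α → Z → ℝ) (c : ℝ),
      (∀ᵐ t ∂μ, φ t 0 = 0 ∧ (∀ a b, |φ t a - φ t b| ≤ c * ‖a - b‖) ∧
        ∀ (a b : Z) (p q : ℝ), 0 ≤ p → 0 ≤ q → p + q = 1 → φ t (p • a + q • b) ≤ p * φ t a + q * φ t b) →
      (∀ x : α → Z, AEStronglyMeasurable x μ → AEStronglyMeasurable (fun t => φ t (x t)) μ) →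
      ∀ ε : ℝ, (∀ᶠ n in Filter.atTop, ∫ t, φ t (V n t) ∂μ ≤ ε) →
        Integrable (fun t => φ t (v t)) μ ∧ ∫ t, φ t (v t) ∂μ ≤ ε := by
  have hmem : ∀ n, MemLp (V n) 2 μ := fun n => MemLp.of_bound (hV n) Λ (Filter.Eventually.of_forall (hbd n))
  set W : ℕ → Lp Z 2 μ := fun n => (hmem n).toLp (V n) with hW
  set K : ℕ → Set (Lp Z 2 μ) := fun n => closure (convexHull ℝ {x | ∃ m, n ≤ m ∧ x = W m}) with hK
  obtain ⟨b, hb⟩ : ∃ b : ℝ, ∀ n, ‖W n‖ ≤ b := by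
    refine ⟨_, fun n => Lp.norm_le_of_ae_bound hΛ ?_⟩
    filter_upwards [(hmem n).coeFn_toLp] with t ht
    rw [ht]; exact hbd n t
  have hsub : ∀ n (D : Set (Lp Z 2 μ)), IsClosed D → Convex ℝ D → (∀ m, n ≤ m → W m ∈ D) → K n ⊆ D := by
    intro n D hD1 hD2 h
    refine closure_minimal (convexHull_min ?_ hD2) hD1
    rintro x ⟨m, hm, rfl⟩
    exact h m hm
  have hin : ∀ n m, n ≤ m → W m ∈ K n := fun n m h => subset_closure (subset_convexHull ℝ _ ⟨m, h, rfl⟩)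
  obtain ⟨x, hx⟩ := convex_inter K (fun n => ⟨W n, hin n n le_rfl⟩) (fun n => isClosed_closure)
    (fun n => (convex_convexHull ℝ _).closure)
    (fun n m hnm => hsub m _ isClosed_closure (convex_convexHull ℝ _).closure
      (fun k hk => hin n k (hnm.trans hk))) b
    (fun n x hx => by
      have := hsub n (Metric.closedBall 0 b) Metric.isClosed_closedBall (convex_closedBall 0 b)
        (fun m _ => by simpa using hb m) hx
      simpa using this)
  have hLint : ∀ y : Lp Z 2 μ, Integrable y μ := fun y => (Lp.memLp y).integrable (by norm_num)
  obtain ⟨c₁, hc₁, hl1⟩ := lp_l1 (Z := Z) μ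
  refine ⟨x, hLint x, ?_⟩
  intro φ c hφ hmeas ε hev
  have hIntg : ∀ y : α → Z, Integrable y μ → Integrable (fun t => φ t (y t)) μ := by
    intro y hy
    refine (hy.norm.const_mul c).mono' (hmeas y hy.aestronglyMeasurable) ?_
    filter_upwards [hφ] with t ht
    have := ht.2.1 (y t) 0
    rw [ht.1] at this
    simpa using this
  refine ⟨hIntg x (hLint x), ?_⟩
  obtain ⟨n, hn⟩ := Filter.eventually_atTop.1 hev
  set Φ : Lp Z 2 μ → ℝ := fun y => ∫ t, φ t (y t) ∂μ with hΦ
  have hlip : ∀ y y', |Φ y - Φ y'| ≤ |c| * c₁ * ‖y - y'‖ := by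
    intro y y'
    simp only [hΦ]
    rw [← integral_sub (hIntg y (hLint y)) (hIntg y' (hLint y'))]
    rw [← Real.norm_eq_abs]
    have hb' : ∀ᵐ t ∂μ, ‖φ t (y t) - φ t (y' t)‖ ≤ |c| * ‖(y - y' : Lp Z 2 μ) t‖ := by
      filter_upwards [hφ, Lp.coeFn_sub y y'] with t ht h2
      rw [h2]
      refine (ht.2.1 (y t) (y' t)).trans ?_
      exact mul_le_mul_of_nonneg_right (le_abs_self c) (norm_nonneg _)
    refine (norm_integral_le_of_norm_le ((hLint (y - y')).norm.const_mul |c|) hb').trans ?_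
    · rw [integral_const_mul, mul_assoc]
      exact mul_le_mul_of_nonneg_left (hl1 _) (abs_nonneg _)
  have hcont : Continuous Φ := by
    refine (LipschitzWith.of_dist_le_mul (K := Real.toNNReal (|c| * c₁)) fun y y' => ?_).continuous
    rw [Real.dist_eq, dist_eq_norm, Real.coe_toNNReal _ (by positivity)]
    exact hlip y y'
  have := hsub n {y | Φ y ≤ ε} (isClosed_le hcont continuous_const) (by
    intro y hy y' hy' p q hp hq hpq
    have hy : Φ y ≤ ε := hy
    have hy' : Φ y' ≤ ε := hy'
    change Φ (p • y + q • y') ≤ ε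
    have h1 : Φ (p • y + q • y') ≤ p * Φ y + q * Φ y' := by
      simp only [hΦ]
      rw [← integral_const_mul, ← integral_const_mul,
        ← integral_add ((hIntg y (hLint y)).const_mul p) ((hIntg y' (hLint y')).const_mul q)]
      refine integral_mono_ae (hIntg _ (hLint _))
        (((hIntg y (hLint y)).const_mul p).add ((hIntg y' (hLint y')).const_mul q)) ?_
      filter_upwards [hφ, Lp.coeFn_add (p • y) (q • y'), Lp.coeFn_smul p y, Lp.coeFn_smul q y'] with t ht h2 h3 h4
      rw [h2, Pi.add_apply, h3, h4]
      exact ht.2.2 (y t) (y' t) p q hp hq hpq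
    have h2 : p * Φ y ≤ p * ε := by gcongr
    have h3 : q * Φ y' ≤ q * ε := by gcongr
    have h4 : p * ε + q * ε = ε := by rw [← add_mul, hpq, one_mul]
    linarith) (by
    intro m hm
    change ∫ t, φ t (W m t) ∂μ ≤ ε
    rw [integral_congr_ae (g := fun t => φ t (V m t))]
    · exact hn m hm
    · filter_upwards [(hmem m).coeFn_toLp] with t ht
      simp only [hW]
      rw [ht]) (hx n)
  exact this


section deriv

variable {B : Z → Z →L[ℝ] ℝ} {H : Z → Z →L[ℝ] Z →L[ℝ] ℝ} {j : Z → ℝ}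
    {f f' : ℝ → Z →L[ℝ] ℝ} {ω : ℝ → ℝ} {κ C M r L Λ ρ T : ℝ} {z₀ : Z}

lemma Setting.j_lip (S : Setting B H j f f' ω κ C M r L Λ ρ T) (a b : Z) : |j a - j b| ≤ ρ * ‖a - b‖ := by
  have h1 := S.j_add b (a - b)
  have h2 := S.j_add a (b - a)
  have h3 := S.j_le (a - b)
  have h4 := S.j_le (b - a)
  rw [add_sub_cancel] at h1 h2
  rw [norm_sub_rev b a] at h4
  rw [abs_le]
  constructor <;> linarith

lemma Setting.j_zero (S : Setting B H j f f' ω κ C M r L Λ ρ T) : j 0 = 0 := by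
  have := S.j_smul 0 0 le_rfl
  simpa using this

lemma Setting.j_cont (S : Setting B H j f f' ω κ C M r L Λ ρ T) : Continuous j := by
  refine (LipschitzWith.of_dist_le_mul (K := Real.toNNReal ρ) fun y y' => ?_).continuous
  rw [Real.dist_eq, dist_eq_norm, Real.coe_toNNReal _ S.ρ_nn]
  exact S.j_lip y y'

/-- The limit is a differential solution. -/
lemma exists_deriv (S : Setting B H j f f' ω κ C M r L Λ ρ T) (hr : ‖z₀‖ + Λ * T ≤ r) (c2 c3 : ℝ)
    (hA : ∀ τ : ℝ, 0 < τ → ∃ u v q, Approx B j f Λ T (c3 * τ) (c2 * τ ^ 2) z₀ u v q)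
    (y : ℝ → Z) (K : ℝ) (hy : ∀ τ : ℝ, 0 < τ → ∀ u v q,
      Approx B j f Λ T (c3 * τ) (c2 * τ ^ 2) z₀ u v q → ∀ s ∈ Set.Icc (0:ℝ) T, ‖u s - y s‖ ≤ K * τ) :
    ∃ y' : ℝ → Z, IntervalIntegrable y' volume 0 T ∧
      (∀ s ∈ Set.Icc (0:ℝ) T, y s = z₀ + ∫ x in (0:ℝ)..s, y' x) ∧
      ∀ᵐ s ∂(volume.restrict (Set.Ioo (0:ℝ) T)),
        (∀ x, (f s - B (y s)) x ≤ j x) ∧ j (y' s) ≤ (f s - B (y s)) (y' s) := by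
  have hT := S.T_pos
  have hΛ := S.Λ_nn
  have hM := S.M_nn
  have hA' : ∀ n : ℕ, ∃ u v q, Approx B j f Λ T (c3 * (1 / ((n:ℝ) + 1))) (c2 * (1 / ((n:ℝ) + 1)) ^ 2) z₀ u v q :=
    fun n => hA _ (by positivity)
  choose U V' Q hU using hA'
  have hpos : ∀ n : ℕ, 0 < 1 / ((n:ℝ) + 1) := fun n => by positivity
  have hlim : Filter.Tendsto (fun n : ℕ => 1 / ((n:ℝ) + 1)) Filter.atTop (nhds 0) :=
    tendsto_one_div_add_atTop_nhds_zero_nat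
  have hUy : ∀ n, ∀ s ∈ Set.Icc (0:ℝ) T, ‖U n s - y s‖ ≤ K * (1 / ((n:ℝ) + 1)) :=
    fun n s hs => hy _ (hpos n) _ _ _ (hU n) s hs
  have hUlim : ∀ s ∈ Set.Icc (0:ℝ) T, Filter.Tendsto (fun n => U n s) Filter.atTop (nhds (y s)) := by
    intro s hs
    rw [tendsto_iff_norm_sub_tendsto_zero]
    refine squeeze_zero (fun n => norm_nonneg _) (fun n => hUy n s hs) ?_
    simpa using hlim.const_mul K
  have hyr : ∀ s ∈ Set.Icc (0:ℝ) T, ‖y s‖ ≤ r := fun s hs =>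
    le_of_tendsto' (hUlim s hs).norm fun n => (hU n).norm_le hΛ hr hs
  set μ : Measure ℝ := volume.restrict (Set.Ioc (0:ℝ) T) with hμ
  obtain ⟨v, hv, hφ⟩ := weak_limit μ (V := V') (fun n => (hU n).v_sm.aestronglyMeasurable) hΛ
    (fun n s => (hU n).v_bd s)
  have hvI : IntervalIntegrable v volume 0 T := by
    rw [intervalIntegrable_iff_integrableOn_Ioc_of_le hT.le]
    exact hv
  have hae : ∀ᵐ t ∂μ, t ∈ Set.Ioo (0:ℝ) T := by
    rw [hμ, ← Measure.restrict_congr_set Ioo_ae_eq_Ioc]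
    exact ae_restrict_mem measurableSet_Ioo
  -- the primitive of `v`
  have hprim : ∀ s ∈ Set.Icc (0:ℝ) T, y s = z₀ + ∫ x in (0:ℝ)..s, v x := by
    intro s hs
    have hset : Set.Ioc 0 T ∩ Set.Ioc 0 s = Set.Ioc 0 s :=
      Set.inter_eq_right.2 (Set.Ioc_subset_Ioc_right hs.2)
    have hval : ∀ (ζ : Z) (g : ℝ → Z), Integrable g μ →
        ∫ t, (Set.Ioc 0 s).indicator (fun t => inner ℝ ζ (g t)) t ∂μ = inner ℝ ζ (∫ x in (0:ℝ)..s, g x) := by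
      intro ζ g hg
      rw [integral_indicator measurableSet_Ioc, hμ, Measure.restrict_restrict measurableSet_Ioc,
        Set.inter_comm, hset, intervalIntegral.integral_of_le hs.1]
      refine integral_inner ?_ ζ
      have : IntegrableOn g (Set.Ioc 0 T) volume := hg
      exact this.mono_set (Set.Ioc_subset_Ioc_right hs.2)
    have key : ∀ ζ : Z, inner ℝ ζ (∫ x in (0:ℝ)..s, v x) ≤ inner ℝ ζ (y s - z₀) := by
      intro ζ
      refine le_of_forall_pos_le_add fun ε hε => ?_
      have h := hφ (fun t a => (Set.Ioc 0 s).indicator (fun _ => inner ℝ ζ a) t) ‖ζ‖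
        (Filter.Eventually.of_forall fun t => by
          by_cases ht : t ∈ Set.Ioc 0 s
          · simp only [Set.indicator_of_mem ht]
            refine ⟨inner_zero_right _, fun a b => ?_, fun a b p q hp hq hpq => ?_⟩
            · rw [← inner_sub_right]
              exact abs_real_inner_le_norm _ _
            · rw [inner_add_right, inner_smul_right, inner_smul_right]
          · simp only [Set.indicator_of_notMem ht]
            refine ⟨trivial, fun a b => ?_, fun a b p q hp hq hpq => by simp⟩
            simp only [sub_zero, abs_zero]; positivity)
        (fun x hx => by
          have : AEStronglyMeasurable ((Set.Ioc 0 s).indicator (fun t => inner ℝ ζ (x t))) μ :=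
            (aestronglyMeasurable_const.inner hx).indicator measurableSet_Ioc
          refine this.congr (Filter.Eventually.of_forall fun t => ?_)
          by_cases ht : t ∈ Set.Ioc 0 s <;> simp [ht])
        (inner ℝ ζ (y s - z₀) + ε) (by
          have hl : Filter.Tendsto (fun n => (inner ℝ ζ (U n s - z₀) : ℝ)) Filter.atTop
              (nhds (inner ℝ ζ (y s - z₀))) :=
            tendsto_const_nhds.inner ((hUlim s hs).sub_const z₀)
          filter_upwards [hl.eventually_le_const (lt_add_of_pos_right _ hε)] with n hn
          have e : ∫ t, (Set.Ioc 0 s).indicator (fun _ => inner ℝ ζ (V' n t)) t ∂μ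
              = ∫ t, (Set.Ioc 0 s).indicator (fun t => inner ℝ ζ (V' n t)) t ∂μ := by
            refine integral_congr_ae (Filter.Eventually.of_forall fun t => ?_)
            by_cases ht : t ∈ Set.Ioc 0 s <;> simp [ht]
          rw [e, hval ζ (V' n) ((intervalIntegrable_iff_integrableOn_Ioc_of_le hT.le).1 ((hU n).v_int 0 T))]
          have := (hU n).u_eq s
          rw [this, add_sub_cancel_left] at hn
          exact hn)
      have e : ∫ t, (Set.Ioc 0 s).indicator (fun _ => inner ℝ ζ (v t)) t ∂μ
          = ∫ t, (Set.Ioc 0 s).indicator (fun t => inner ℝ ζ (v t)) t ∂μ := by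
        refine integral_congr_ae (Filter.Eventually.of_forall fun t => ?_)
        by_cases ht : t ∈ Set.Ioc 0 s <;> simp [ht]
      have h2 := h.2
      rw [e, hval ζ v hv] at h2
      exact h2
    have h3 := key ((∫ x in (0:ℝ)..s, v x) - (y s - z₀))
    rw [← sub_nonpos, ← inner_sub_right, real_inner_self_nonpos] at h3
    rw [sub_eq_zero.1 h3]; abel
  -- continuity
  have hycont : ContinuousOn y (Set.Icc (0:ℝ) T) := by
    have h1 : ContinuousOn (fun s => z₀ + ∫ x in (0:ℝ)..s, v x) (Set.Icc (0:ℝ) T) := by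
      have := intervalIntegral.continuousOn_primitive_interval' hvI Set.left_mem_uIcc
      rw [Set.uIcc_of_le hT.le] at this
      exact continuousOn_const.add this
    exact h1.congr hprim
  have hBc : Continuous B := continuous_iff_continuousAt.2 fun z => (S.der z).continuousAt
  have hfc : ContinuousOn f (Set.Icc (0:ℝ) T) := fun s hs => (S.derf s hs).continuousAt.continuousWithinAt
  set g : ℝ → Z →L[ℝ] ℝ := fun s => f s - B (y s) with hg
  have hgc : ContinuousOn g (Set.Icc (0:ℝ) T) := hfc.sub (hBc.comp_continuousOn hycont)
  obtain ⟨c, hc⟩ := isCompact_Icc.exists_bound_of_continuousOn hgc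
  have hgm : AEStronglyMeasurable g μ :=
    (hgc.mono Set.Ioc_subset_Icc_self).aestronglyMeasurable measurableSet_Ioc
  have hdist : ∀ n, ∀ s ∈ Set.Ioo (0:ℝ) T, ∃ σ : Z →L[ℝ] ℝ, ∃ a : ℝ, (∀ x, σ x ≤ j x) ∧ 
      j (V' n s) ≤ σ (V' n s) + a ∧ ‖σ - g s‖ ≤ (c3 + M * K) * (1 / ((n:ℝ) + 1)) ∧ a ≤ Q n s := by
    intro n s hs
    obtain ⟨σ, a, e, h1, h2, h3, h4, h5, h6⟩ := (hU n).main s hs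
    have hs' := Set.Ioo_subset_Icc_self hs
    have he : 0 ≤ e := (norm_nonneg _).trans h4
    refine ⟨σ, a, h1, h3, ?_, by nlinarith [mul_nonneg hΛ he]⟩
    have h7 := lip_bound S.der S.bdH ((hU n).norm_le hΛ hr hs') (hyr s hs')
    have h8 : σ - g s = (σ - (f s - B (U n s))) - (B (U n s) - B (y s)) := by
      simp only [hg]; abel
    rw [h8]
    refine (norm_sub_le _ _).trans ?_
    have h9 := mul_le_mul_of_nonneg_left (hUy n s hs') hM
    calc _ ≤ c3 * (1 / ((n:ℝ) + 1)) + M * (K * (1 / ((n:ℝ) + 1))) := by linarith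
      _ = _ := by ring
  have hgK : ∀ s ∈ Set.Ioo (0:ℝ) T, ∀ x, g s x ≤ j x := by
    intro s hs x
    have h1 : Filter.Tendsto (fun n : ℕ => j x + (c3 + M * K) * (1 / ((n:ℝ) + 1)) * ‖x‖) Filter.atTop
        (nhds (j x)) := by
      simpa using ((hlim.const_mul (c3 + M * K)).mul_const ‖x‖).const_add (j x)
    refine ge_of_tendsto' h1 fun n => ?_
    obtain ⟨σ, a, k1, k2, k3, k4⟩ := hdist n s hs
    have k5 := (ContinuousLinearMap.le_opNorm (σ - g s) x).trans
      (mul_le_mul_of_nonneg_right k3 (norm_nonneg x))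
    have k6 := (abs_le.1 k5).1
    rw [sub_apply] at k6
    linarith [k1 x]
  -- energy inequality
  have hmain := hφ (fun t a => j a - g t a) (ρ + c) (by
      filter_upwards [hae] with t ht
      refine ⟨by simp [S.j_zero], fun a b => ?_, fun a b p q hp hq hpq => ?_⟩
      · have h1 := S.j_lip a b
        have h2 := (ContinuousLinearMap.le_opNorm (g t) (a - b)).trans
          (mul_le_mul_of_nonneg_right (hc t (Set.Ioo_subset_Icc_self ht)) (norm_nonneg (a - b)))
        rw [map_sub, Real.norm_eq_abs, abs_le] at h2
        rw [abs_le] at h1 ⊢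
        constructor <;> nlinarith
      · have h1 := S.j_add (p • a) (q • b)
        rw [S.j_smul p a hp, S.j_smul q b hq] at h1
        rw [map_add, map_smul, map_smul, smul_eq_mul, smul_eq_mul]
        linarith)
    (fun x hx => (S.j_cont.comp_aestronglyMeasurable hx).sub
      ((ContinuousLinearMap.apply ℝ ℝ : Z →L[ℝ] (Z →L[ℝ] ℝ) →L[ℝ] ℝ).aestronglyMeasurable_comp₂ hx hgm))
  have hle : ∀ ε : ℝ, 0 < ε → Integrable (fun t => j (v t) - g t (v t)) μ ∧
      ∫ t, (j (v t) - g t (v t)) ∂μ ≤ ε := by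
    intro ε hε
    refine hmain ε ?_
    have hl : Filter.Tendsto (fun n : ℕ => c2 * (1 / ((n:ℝ) + 1)) ^ 2 +
        T * ((c3 + M * K) * (1 / ((n:ℝ) + 1)) * Λ)) Filter.atTop (nhds 0) := by
      simpa using ((hlim.pow 2).const_mul c2).add (((hlim.const_mul (c3 + M * K)).mul_const Λ).const_mul T)
    filter_upwards [hl.eventually_le_const hε] with n hn
    refine le_trans ?_ hn
    have hqi : Integrable (Q n) μ := (intervalIntegrable_iff_integrableOn_Ioc_of_le hT.le).1 (hU n).q_int
    have hci : Integrable (fun _ : ℝ => (c3 + M * K) * (1 / ((n:ℝ) + 1)) * Λ) μ := integrable_const _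
    have h1 : ∫ t, (j (V' n t) - g t (V' n t)) ∂μ ≤
        ∫ t, (Q n t + (c3 + M * K) * (1 / ((n:ℝ) + 1)) * Λ) ∂μ := by
      refine integral_mono_of_nonneg ?_ (hqi.add hci) ?_
      · filter_upwards [hae] with t ht
        exact sub_nonneg.2 (hgK t ht _)
      · filter_upwards [hae] with t ht
        obtain ⟨σ, a, k1, k2, k3, k4⟩ := hdist n t ht
        have k5 := (ContinuousLinearMap.le_opNorm (σ - g t) (V' n t)).trans
          (mul_le_mul k3 ((hU n).v_bd t) (norm_nonneg _) ((norm_nonneg _).trans k3))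
        have k6 := (abs_le.1 k5).2
        rw [sub_apply] at k6
        change j (V' n t) - g t (V' n t) ≤ Q n t + _
        linarith
    refine h1.trans ?_
    rw [integral_add hqi hci, integral_const]
    have h2 := (hU n).q_le
    rw [intervalIntegral.integral_of_le hT.le] at h2
    have h3 : μ.real Set.univ = T := by
      simp [hμ, measureReal_def, hT.le]
    rw [h3, smul_eq_mul]
    exact add_le_add h2 le_rfl
  have hIntg := (hle 1 one_pos).1
  have hnn : 0 ≤ᵐ[μ] fun t => j (v t) - g t (v t) := by
    filter_upwards [hae] with t ht
    exact sub_nonneg.2 (hgK t ht _)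
  have hz : ∫ t, (j (v t) - g t (v t)) ∂μ = 0 :=
    le_antisymm (le_of_forall_pos_le_add fun ε hε => by simpa using (hle ε hε).2)
      (integral_nonneg_of_ae hnn)
  have hzero := (integral_eq_zero_iff_of_nonneg_ae hnn hIntg).1 hz
  refine ⟨v, hvI, hprim, ?_⟩
  rw [Measure.restrict_congr_set Ioo_ae_eq_Ioc]
  change ∀ᵐ s ∂μ, _
  filter_upwards [hae, hzero] with t ht h0
  have h0 : j (v t) - g t (v t) = 0 := h0
  exact ⟨hgK t ht, by linarith⟩

end deriv


/-! ### The concrete operators -/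

/-- The derivative of the time independent part of the energy. -/
def Bm (A : Z →L[ℝ] Z →L[ℝ] ℝ) (DF : Z → V →L[ℝ] ℝ) (ι : Z →L[ℝ] V) (z : Z) : Z →L[ℝ] ℝ :=
  A z + (DF z).comp ι

/-- The second derivative of the energy. -/
def Hm (A : Z →L[ℝ] Z →L[ℝ] ℝ) (D2F : Z → Z →L[ℝ] V →L[ℝ] ℝ) (ι : Z →L[ℝ] V) (z : Z) :
    Z →L[ℝ] Z →L[ℝ] ℝ :=
  A + (ContinuousLinearMap.precomp ℝ ι).comp (D2F z)

lemma Hm_apply (A : Z →L[ℝ] Z →L[ℝ] ℝ) (D2F : Z → Z →L[ℝ] V →L[ℝ] ℝ) (ι : Z →L[ℝ] V) (z v w : Z) :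
    Hm A D2F ι z v w = A v w + D2F z v (ι w) := rfl

lemma comp_norm_le {ι : Z →L[ℝ] V} (hι : ∀ w, ‖ι w‖ ≤ ‖w‖) (ξ : V →L[ℝ] ℝ) : ‖ξ.comp ι‖ ≤ ‖ξ‖ := by
  refine ContinuousLinearMap.opNorm_le_bound _ (norm_nonneg _) fun w => ?_
  exact (ξ.le_opNorm (ι w)).trans (mul_le_mul_of_nonneg_left (hι w) (norm_nonneg _))

lemma comp_der {DF : Z → V →L[ℝ] ℝ} {D2F : Z → Z →L[ℝ] V →L[ℝ] ℝ} (ι : Z →L[ℝ] V)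
    (h : ∀ w, HasFDerivAt DF (D2F w) w) (z : Z) :
    HasFDerivAt (fun w => (DF w).comp ι) ((ContinuousLinearMap.precomp ℝ ι).comp (D2F z)) z := by
  have h1 : HasFDerivAt (fun ξ : V →L[ℝ] ℝ => ContinuousLinearMap.precomp ℝ ι ξ)
      (ContinuousLinearMap.precomp ℝ ι) (DF z) := ContinuousLinearMap.hasFDerivAt _
  exact HasFDerivAt.comp (g := fun ξ : V →L[ℝ] ℝ => ContinuousLinearMap.precomp ℝ ι ξ) z h1 (h z)

lemma Bm_der (A : Z →L[ℝ] Z →L[ℝ] ℝ) {DF : Z → V →L[ℝ] ℝ} {D2F : Z → Z →L[ℝ] V →L[ℝ] ℝ} (ι : Z →L[ℝ] V)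
    (h : ∀ w, HasFDerivAt DF (D2F w) w) (z : Z) : HasFDerivAt (Bm A DF ι) (Hm A D2F ι z) z :=
  A.hasFDerivAt.add (comp_der ι h z)

lemma Hm_sym {A : Z →L[ℝ] Z →L[ℝ] ℝ} {F : Z → ℝ} {DF : Z → V →L[ℝ] ℝ} {D2F : Z → Z →L[ℝ] V →L[ℝ] ℝ}
    (ι : Z →L[ℝ] V) (hA : ∀ z w, A z w = A w z) (hF : ∀ w, HasFDerivAt F ((DF w).comp ι) w)
    (h : ∀ w, HasFDerivAt DF (D2F w) w) (z v w : Z) : Hm A D2F ι z v w = Hm A D2F ι z w v := by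
  have h1 : HasFDerivAt (fun w => (DF w).comp ι) ((ContinuousLinearMap.precomp ℝ ι).comp (D2F z)) z :=
    comp_der ι h z
  have h2 : D2F z v (ι w) = D2F z w (ι v) := second_derivative_symmetric hF h1 v w
  rw [Hm_apply, Hm_apply, hA, h2]

lemma energy_der {A : Z →L[ℝ] Z →L[ℝ] ℝ} {F : Z → ℝ} {DF : Z → V →L[ℝ] ℝ} (ℓ : ℝ → V →L[ℝ] ℝ)
    (ι : Z →L[ℝ] V) (hA : ∀ z w, A z w = A w z) (hF : ∀ w, HasFDerivAt F ((DF w).comp ι) w)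
    (s : ℝ) (z : Z) : HasFDerivAt (energy A F ℓ ι s) (Bm A DF ι z - (ℓ s).comp ι) z := by
  have h1 : HasFDerivAt (fun z : Z => A z z) _ z :=
    A.hasFDerivAt.clm_apply (hasFDerivAt_id z)
  have h2 := ((h1.const_mul (1/2 : ℝ)).add (hF z)).sub ((ℓ s).comp ι).hasFDerivAt
  refine h2.congr_fderiv ?_
  ext w
  simp [Bm]
  rw [hA w z]; ring

lemma Hm_lip {A : Z →L[ℝ] Z →L[ℝ] ℝ} {D2F : Z → Z →L[ℝ] V →L[ℝ] ℝ} {ι : Z →L[ℝ] V}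
    (hs : ∀ z v w, Hm A D2F ι z v w = Hm A D2F ι z w v)
    (hC21 : ∀ r : ℝ, 0 < r → ∃ Cr : ℝ, 0 ≤ Cr ∧ ∀ z₁ z₂ v : Z,
      ‖z₁‖ ≤ r → ‖z₂‖ ≤ r →
      D2F z₁ v (ι v) - D2F z₂ v (ι v) ≤ Cr * ‖z₁ - z₂‖ * ‖v‖ ^ 2) (r : ℝ) (hr : 0 < r) :
    ∃ C M : ℝ, 0 ≤ C ∧ 0 ≤ M ∧
      (∀ z₁ z₂, ‖z₁‖ ≤ r → ‖z₂‖ ≤ r → ‖Hm A D2F ι z₁ - Hm A D2F ι z₂‖ ≤ C * ‖z₁ - z₂‖) ∧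
      ∀ z, ‖z‖ ≤ r → ‖Hm A D2F ι z‖ ≤ M := by
  obtain ⟨C, hC, h⟩ := hC21 r hr
  have h1 : ∀ z₁ z₂, ‖z₁‖ ≤ r → ‖z₂‖ ≤ r → ‖Hm A D2F ι z₁ - Hm A D2F ι z₂‖ ≤ C * ‖z₁ - z₂‖ := by
    intro z₁ z₂ k1 k2
    refine polar_bound _ (fun v w => ?_) (by positivity) fun v => ?_
    · simp only [sub_apply]
      rw [hs z₁, hs z₂]
    · simp only [sub_apply, Hm_apply]
      have a1 := h z₁ z₂ v k1 k2
      have a2 := h z₂ z₁ v k2 k1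
      rw [norm_sub_rev z₂ z₁] at a2
      rw [abs_le]; constructor <;> linarith
  refine ⟨C, ‖Hm A D2F ι 0‖ + C * r, hC, by positivity, h1, fun z hz => ?_⟩
  have a1 := h1 z 0 hz (by simpa using hr.le)
  have a2 := norm_le_norm_add_norm_sub' (Hm A D2F ι z) (Hm A D2F ι 0)
  rw [sub_zero] at a1
  have a3 := mul_le_mul_of_nonneg_left hz hC
  linarith

lemma bv_omega {g : ℝ → V →L[ℝ] ℝ} {T : ℝ} (hT : 0 ≤ T) (h : BoundedVariationOn g (Set.Icc (0:ℝ) T)) :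
    ∃ ω : ℝ → ℝ, ∀ x ∈ Set.Icc (0:ℝ) T, ∀ y ∈ Set.Icc (0:ℝ) T, x ≤ y → ‖g y - g x‖ ≤ ω y - ω x := by
  refine ⟨fun x => variationOnFromTo g (Set.Icc 0 T) 0 x, fun x hx y hy hxy => ?_⟩
  have h0 : (0:ℝ) ∈ Set.Icc 0 T := ⟨le_rfl, hT⟩
  have h1 := variationOnFromTo.add h.locallyBoundedVariationOn h0 hx hy
  have h2 : ‖g y - g x‖ ≤ variationOnFromTo g (Set.Icc 0 T) x y := by
    rw [variationOnFromTo.eq_of_le _ _ hxy, ← dist_eq_norm]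
    have h3 := h.locallyBoundedVariationOn x y hx hy
    exact h3.dist_le ⟨hy, hxy, le_rfl⟩ ⟨hx, le_rfl, hxy⟩
  change _ ≤ variationOnFromTo g (Set.Icc 0 T) 0 y - variationOnFromTo g (Set.Icc 0 T) 0 x
  linarith

/-- A curve with integrable derivative is bounded. -/
lemma prim_bounded {T : ℝ} (hT : 0 ≤ T) {y v : ℝ → Z} {z₀ : Z} (hv : IntervalIntegrable v volume 0 T)
    (hy : ∀ s ∈ Set.Icc (0:ℝ) T, y s = z₀ + ∫ x in (0:ℝ)..s, v x) :
    ∃ b : ℝ, ∀ s ∈ Set.Icc (0:ℝ) T, ‖y s‖ ≤ b := by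
  have h1 : ContinuousOn (fun s => z₀ + ∫ x in (0:ℝ)..s, v x) (Set.Icc (0:ℝ) T) := by
    have := intervalIntegral.continuousOn_primitive_interval' hv Set.left_mem_uIcc
    rw [Set.uIcc_of_le hT] at this
    exact continuousOn_const.add this
  exact isCompact_Icc.exists_bound_of_continuousOn (h1.congr hy)

/-- Uniqueness of differential solutions. -/
lemma unique_sol {B : Z → Z →L[ℝ] ℝ} {H : Z → Z →L[ℝ] Z →L[ℝ] ℝ} {j : Z → ℝ} {f : ℝ → Z →L[ℝ] ℝ}
    {κ T : ℝ} (hT : 0 ≤ T) (hκ0 : 0 < κ)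
    (hB : ∀ z, HasFDerivAt B (H z) z) (hκ : ∀ z v, κ * ‖v‖ ^ 2 ≤ H z v v)
    (hsym : ∀ z v w, H z v w = H z w v)
    (hH : ∀ r : ℝ, 0 < r → ∃ C M : ℝ, 0 ≤ C ∧ 0 ≤ M ∧
      (∀ z₁ z₂, ‖z₁‖ ≤ r → ‖z₂‖ ≤ r → ‖H z₁ - H z₂‖ ≤ C * ‖z₁ - z₂‖) ∧ ∀ z, ‖z‖ ≤ r → ‖H z‖ ≤ M)
    {z₀ : Z} {y₁ y₂ v₁ v₂ : ℝ → Z}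
    (hv₁ : IntervalIntegrable v₁ volume 0 T) (hv₂ : IntervalIntegrable v₂ volume 0 T)
    (hu₁ : ∀ s ∈ Set.Icc (0 : ℝ) T, y₁ s = z₀ + ∫ r in (0 : ℝ)..s, v₁ r)
    (hu₂ : ∀ s ∈ Set.Icc (0 : ℝ) T, y₂ s = z₀ + ∫ r in (0 : ℝ)..s, v₂ r)
    (h₁ : ∀ᵐ s ∂(volume.restrict (Set.Ioo (0:ℝ) T)),
        (∀ x, (f s - B (y₁ s)) x ≤ j x) ∧ j (v₁ s) ≤ (f s - B (y₁ s)) (v₁ s))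
    (h₂ : ∀ᵐ s ∂(volume.restrict (Set.Ioo (0:ℝ) T)),
        (∀ x, (f s - B (y₂ s)) x ≤ j x) ∧ j (v₂ s) ≤ (f s - B (y₂ s)) (v₂ s)) :
    ∀ s ∈ Set.Icc (0:ℝ) T, y₁ s = y₂ s := by
  obtain ⟨b₁, hb₁⟩ := prim_bounded hT hv₁ hu₁
  obtain ⟨b₂, hb₂⟩ := prim_bounded hT hv₂ hu₂
  obtain ⟨C, M, hC, hM, hl, hb⟩ := hH (max (max b₁ b₂) 1) (by positivity)
  intro s hs
  have hg := gronwall_compare hT hκ0 hC hB hκ hsym hl hb hv₁ hv₂ (q := fun _ => 0)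
    (intervalIntegrable_const) (fun _ => le_rfl) hu₁ hu₂
    (fun s hs => (hb₁ s hs).trans ((le_max_left _ _).trans (le_max_left _ _)))
    (fun s hs => (hb₂ s hs).trans ((le_max_right _ _).trans (le_max_left _ _))) (by
      filter_upwards [h₁, h₂] with s k₁ k₂
      have a1 := k₁.1 (v₂ s)
      have a2 := k₂.1 (v₁ s)
      have a3 := k₁.2
      have a4 := k₂.2
      simp only [sub_apply, map_sub] at *
      linarith) s hs
  simp only [intervalIntegral.integral_zero, mul_zero, zero_mul] at hg
  have h3 : ‖y₁ s - y₂ s‖ ^ 2 ≤ 0 := by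
    by_contra hc
    push Not at hc
    have := mul_pos hκ0 hc
    linarith
  have h4 : ‖y₁ s - y₂ s‖ = 0 := by
    have := sq_nonneg ‖y₁ s - y₂ s‖
    exact pow_eq_zero_iff (two_ne_zero) |>.1 (le_antisymm h3 this)
  exact sub_eq_zero.1 (norm_eq_zero.1 h4)


/-- Theorem 3.9: assume `I(t,·) ∈ C^{2,1}_loc(Z;ℝ)`, the energy is
`κ`-uniformly convex, `|ℓ|_Lip ≤ κ − δ` for some `δ ∈ (0,κ]`, `ℓ ∈ W^{1,∞}([0,T];V*)`
and `ℓ′ ∈ BV([0,T];V)`. Then the rate-independent system has a unique differential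
solution `y`, and the piecewise affine interpolants in physical time of the iterates
of the local incremental minimization scheme converge to `y` with
`‖z_τ(s) − y(s)‖_Z ≤ K τ` for all `s ∈ [0,T]`, with `K` independent of `τ`. -/
theorem statement7
    (ι : Z →L[ℝ] V) (ιX : V →L[ℝ] X)
    (A : Z →L[ℝ] Z →L[ℝ] ℝ) (α : ℝ) (F : Z → ℝ) (DF : Z → V →L[ℝ] ℝ)
    (D2F : Z → Z →L[ℝ] V →L[ℝ] ℝ) (R : V → ℝ) (ℓ : ℝ → V →L[ℝ] ℝ) (L T : ℝ)
    (hstand : StandingAssumptions ι ιX A α F DF D2F R ℓ L T)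
    (hC21 : ∀ r : ℝ, 0 < r → ∃ Cr : ℝ, 0 ≤ Cr ∧ ∀ z₁ z₂ v : Z,
      ‖z₁‖ ≤ r → ‖z₂‖ ≤ r →
      D2F z₁ v (ι v) - D2F z₂ v (ι v) ≤ Cr * ‖z₁ - z₂‖ * ‖v‖ ^ 2)
    (κ : ℝ) (hconv : UniformlyConvex A D2F ι κ)
    (δ : ℝ) (hδ0 : 0 < δ) (hδκ : δ ≤ κ) (hLsmall : L ≤ κ - δ)
    (ℓ' : ℝ → V →L[ℝ] ℝ)
    (hℓ' : ∀ s ∈ Set.Icc (0 : ℝ) T, HasDerivAt ℓ (ℓ' s) s)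
    (hℓ'BV : BoundedVariationOn ℓ' (Set.Icc (0 : ℝ) T))
    (z₀ : Z) (hz₀ : LocStable R A DF ℓ ι 0 z₀)
    (t : ℝ → ℕ → ℝ) (z : ℝ → ℕ → Z)
    (hscheme : ∀ τ : ℝ, 0 < τ → Scheme A F R ℓ ι T τ z₀ (t τ) (z τ))
    (N : ℝ → ℕ)
    (hN : ∀ τ : ℝ, 0 < τ → t τ (N τ) = T ∧ ∀ j : ℕ, j < N τ → t τ j < T) :
    ∃ y : ℝ → Z, IsDiffSol A DF ℓ R ι T z₀ y ∧
      (∀ y₂ : ℝ → Z, IsDiffSol A DF ℓ R ι T z₀ y₂ →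
        ∀ s ∈ Set.Icc (0 : ℝ) T, y₂ s = y s) ∧
      ∃ K : ℝ, 0 < K ∧ ∀ τ : ℝ, 0 < τ → ∀ k : ℕ, 1 ≤ k → k ≤ N τ →
        ∀ s ∈ Set.Icc (t τ (k - 1)) (t τ k),
          ‖(z τ (k - 1) + ((s - t τ (k - 1)) / (t τ k - t τ (k - 1))) •
              (z τ k - z τ (k - 1))) - y s‖ ≤ K * τ := by
  obtain ⟨hinj, -, hι, -, hAs, -, -, -, hF, hDF, -, hL, hlip, hT, hRc, -, hR0, hRh, ρ₁, ρ, -, hρ, hRb⟩ := hstand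
  obtain ⟨hκ, hcoer⟩ := hconv
  have hadd := sublin_add hRc hRh
  have hRle : ∀ v, R v ≤ ρ * ‖v‖ := fun v => (hRb v).2
  have hsym := Hm_sym (D2F := D2F) ι hAs hF hDF
  have hder := Bm_der A ι hDF
  have hHl := Hm_lip hsym hC21
  have hco : ∀ z v, κ * ‖v‖ ^ 2 ≤ Hm A D2F ι z v v := fun z v => hcoer z v
  have hDI : ∀ s z, -DI A DF ℓ ι s z = (ℓ s).comp ι - Bm A DF ι z := by
    intro s z
    simp only [DI, Bm]; abel
  set Λ : ℝ := L / κ with hΛdef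
  have hΛ0 : 0 ≤ Λ := by positivity
  have hΛ1 : Λ < 1 := by
    rw [hΛdef, div_lt_one hκ]; linarith
  obtain ⟨ω, hω⟩ := bv_omega hT.le hℓ'BV
  set r : ℝ := ‖z₀‖ + Λ * T + 1 with hrdef
  have hr : ‖z₀‖ + Λ * T ≤ r := by linarith
  have hrpos : 0 < r := by positivity
  obtain ⟨C, M, hC, hM, hlH, hbH⟩ := hHl r hrpos
  have S : Setting (Bm A DF ι) (Hm A D2F ι) (fun v => R (ι v)) (fun s => (ℓ s).comp ι)
      (fun s => (ℓ' s).comp ι) ω κ C M r L Λ ρ T :=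
    { T_pos := hT
      κ_pos := hκ
      C_nn := hC
      L_nn := hL
      Λ_nn := hΛ0
      M_nn := hM
      Lκ := div_mul_cancel₀ L hκ.ne'
      der := hder
      coer := hco
      sym := hsym
      lipH := hlH
      bdH := hbH
      j_nn := fun v => hR0 _
      j_add := fun v w => by simpa using hadd (ι v) (ι w)
      j_smul := fun c v hc => by simpa using hRh c (ι v) hc
      j_le := fun v => (hRle (ι v)).trans (mul_le_mul_of_nonneg_left (hι v) hρ.le)
      ρ_nn := hρ.le
      derf := fun s hs => by
        have h1 : HasFDerivAt (fun ξ : V →L[ℝ] ℝ => ContinuousLinearMap.precomp ℝ ι ξ)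
          (ContinuousLinearMap.precomp ℝ ι) (ℓ s) := ContinuousLinearMap.hasFDerivAt _
        exact HasFDerivAt.comp_hasDerivAt (l := fun ξ : V →L[ℝ] ℝ => ContinuousLinearMap.precomp ℝ ι ξ)
          s h1 (hℓ' s hs)
      lipf := fun x hx y hy => by
        have h1 := hlip.dist_le_mul x hx y hy
        rw [dist_eq_norm, Real.dist_eq, Real.coe_toNNReal L hL] at h1
        have h2 := comp_norm_le hι (ℓ x - ℓ y)
        rw [ContinuousLinearMap.sub_comp] at h2
        exact h2.trans h1
      bv := fun x hx y hy hxy => by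
        have h2 := comp_norm_le hι (ℓ' y - ℓ' x)
        rw [ContinuousLinearMap.sub_comp] at h2
        exact h2.trans (hω x hx y hy hxy) }
  have hz₀' : ∀ v, ((ℓ 0).comp ι - Bm A DF ι z₀) v ≤ R (ι v) := by
    obtain ⟨ξ, hξ, he⟩ := hz₀
    have := (subdiff_forward hadd hRh ι (u := 0) ⟨ξ, by rw [map_zero]; exact hξ, he⟩).1
    rw [hDI] at this
    exact this
  have hgrid := fun τ (hτ : 0 < τ) => scheme_grid S hΛ1 hι hadd hRh (energy_der ℓ ι hAs hF) hτ
    (hscheme τ hτ) hz₀' (hN τ hτ)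
  have happ := fun τ (hτ : 0 < τ) => Grid.approx S (hgrid τ hτ).1 hr
  have hA' : ∀ τ : ℝ, 0 < τ → ∃ u v q, Approx (Bm A DF ι) (fun v => R (ι v)) (fun s => (ℓ s).comp ι) Λ T
      (cK3 ω C Λ T * τ) (cK2 ω C M L Λ T * τ ^ 2) z₀ u v q := by
    intro τ hτ
    obtain ⟨u, v, q, h, -⟩ := happ τ hτ
    exact ⟨u, v, q, h⟩
  obtain ⟨y, K, hK, hy⟩ := exists_limit S hr _ _ hA'
  obtain ⟨y', hyI, hyp, hyae⟩ := exists_deriv S hr _ _ hA' y K hy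
  refine ⟨y, ⟨?_, y', hyI, hyp, ?_⟩, ?_, 2 * Λ + K + 1, by positivity, ?_⟩
  · have := hyp 0 ⟨le_rfl, hT.le⟩
    simpa using this
  · filter_upwards [hyae] with s hs
    rw [← hDI] at hs
    exact subdiff_backward hadd hRh hRle ι hinj hs.1 hs.2
  · rintro y₂ ⟨-, v₂, hv₂, hp₂, hae₂⟩
    refine unique_sol (f := fun s => (ℓ s).comp ι) (j := fun v => R (ι v)) hT.le hκ hder hco hsym hHl
      hv₂ hyI hp₂ hyp ?_ hyae
    filter_upwards [hae₂] with s hs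
    have := subdiff_forward hadd hRh ι hs
    rw [hDI] at this
    exact this
  · intro τ hτ k hk1 hkN s hs
    obtain ⟨m, rfl⟩ : ∃ m, k = m + 1 := ⟨k - 1, by omega⟩
    rw [Nat.add_sub_cancel] at hs ⊢
    obtain ⟨G, hinc⟩ := hgrid τ hτ
    obtain ⟨u, v, q, hu, hclose⟩ := happ τ hτ
    have hmN : m < N τ := hkN
    have h1 := hclose m hmN s hs
    have h0T : s ∈ Set.Icc (0:ℝ) T :=
      ⟨(G.mem hmN.le).1.trans hs.1, hs.2.trans (G.mem hkN).2⟩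
    have h2 := hy τ hτ u v q hu s h0T
    have hpos : 0 < t τ (m + 1) - t τ m := sub_pos.2 (G.lt m hmN)
    set θ := (s - t τ m) / (t τ (m + 1) - t τ m) with hθ
    have hθ0 : 0 ≤ θ := div_nonneg (by linarith [hs.1]) hpos.le
    have hθ1 : θ ≤ 1 := by rw [hθ, div_le_one hpos]; linarith [hs.2]
    have e : z τ m + θ • (z τ (m + 1) - z τ m) - y s
        = -((1 - θ) • (z τ (m + 1) - z τ m)) - (u s - z τ (m + 1)) + (u s - y s) := by
      rw [sub_smul, one_smul]; abel
    have h3 : ‖-((1 - θ) • (z τ (m + 1) - z τ m))‖ ≤ Λ * τ := by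
      rw [norm_neg, norm_smul, Real.norm_eq_abs, abs_of_nonneg (by linarith)]
      have := hinc m
      have h4 : (1 - θ) * ‖z τ (m + 1) - z τ m‖ ≤ 1 * ‖z τ (m + 1) - z τ m‖ :=
        mul_le_mul_of_nonneg_right (by linarith) (norm_nonneg _)
      linarith
    rw [e]
    refine (norm_add_le _ _).trans ?_
    have h5 := norm_sub_le (-((1 - θ) • (z τ (m + 1) - z τ m))) (u s - z τ (m + 1))
    nlinarith

end RIS
end
end

section
/- Under κ-uniform convexity of the energy, there exists m ∈ ℕ, independent of the step size τ (one may take m = ⌈|ℓ|_Lip/κ⌉ + 1), such that for every iteration index k < N̂(τ) there exists an index k̂ ∈ [k, k+m] with 0 ∈ ∂R(0) + D_zI(t_{k̂−1}, z_{k̂}); that is, after at most m iterations the iterate is again locally stable. -/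
open MeasureTheory
open scoped RealInnerProductSpace NNReal

noncomputable section

namespace RIS

variable {Z V X : Type*}
  [NormedAddCommGroup Z] [InnerProductSpace ℝ Z] [CompleteSpace Z]
  [NormedAddCommGroup V] [InnerProductSpace ℝ V] [CompleteSpace V]
  [NormedAddCommGroup X] [NormedSpace ℝ X]

/-- Subadditivity of a convex positively 1-homogeneous function. -/
lemma sub_add_of_convex (R : V → ℝ) (hc : ConvexOn ℝ Set.univ R)
    (hh : ∀ (c : ℝ) (v : V), 0 ≤ c → R (c • v) = c * R v) (a b : V) :
    R (a + b) ≤ R a + R b := by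
  have h := hc.2 (Set.mem_univ a) (Set.mem_univ b) (by norm_num : (0:ℝ) ≤ 1/2)
    (by norm_num : (0:ℝ) ≤ 1/2) (by norm_num)
  rw [← smul_add, hh _ _ (by norm_num)] at h
  simp only [smul_eq_mul] at h
  linarith

/-- Approximate local stability with slack `μ`. -/
def Slack (R : V → ℝ) (A : Z →L[ℝ] Z →L[ℝ] ℝ) (DF : Z → V →L[ℝ] ℝ)
    (ℓ : ℝ → V →L[ℝ] ℝ) (ι : Z →L[ℝ] V) (t : ℝ) (z : Z) (μ : ℝ) : Prop :=
  ∀ v : Z, -(DI A DF ℓ ι t z v) ≤ R (ι v) + μ * ‖ι v‖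

lemma Slack.mono {R : V → ℝ} {A : Z →L[ℝ] Z →L[ℝ] ℝ} {DF : Z → V →L[ℝ] ℝ}
    {ℓ : ℝ → V →L[ℝ] ℝ} {ι : Z →L[ℝ] V} {t : ℝ} {z : Z} {μ ν : ℝ}
    (h : Slack R A DF ℓ ι t z μ) (hle : μ ≤ ν) : Slack R A DF ℓ ι t z ν := by
  intro v
  have := h v
  have := mul_le_mul_of_nonneg_right hle (norm_nonneg (ι v))
  linarith

lemma LocStable.slack {R : V → ℝ} {A : Z →L[ℝ] Z →L[ℝ] ℝ} {DF : Z → V →L[ℝ] ℝ}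
    {ℓ : ℝ → V →L[ℝ] ℝ} {ι : Z →L[ℝ] V} {t : ℝ} {z : Z}
    (hh : ∀ (c : ℝ) (v : V), 0 ≤ c → R (c • v) = c * R v)
    (h : LocStable R A DF ℓ ι t z) : Slack R A DF ℓ ι t z 0 := by
  obtain ⟨ξ, hξ, he⟩ := h
  intro v
  have h0 : R 0 = 0 := by simpa using hh 0 0 le_rfl
  have h1 := hξ (ι v)
  have h2 : ξ (ι v) + DI A DF ℓ ι t z v = 0 := by
    have := congrArg (fun f : Z →L[ℝ] ℝ => f v) he
    simpa using this
  simp only [h0, sub_zero] at h1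
  linarith

lemma Slack.locStable {R : V → ℝ} {A : Z →L[ℝ] Z →L[ℝ] ℝ} {DF : Z → V →L[ℝ] ℝ}
    {ℓ : ℝ → V →L[ℝ] ℝ} {ι : Z →L[ℝ] V} {t : ℝ} {z : Z}
    (hι : Function.Injective (ι : Z → V)) (hc : ConvexOn ℝ Set.univ R)
    (hh : ∀ (c : ℝ) (v : V), 0 ≤ c → R (c • v) = c * R v)
    (ρ : ℝ) (hρ : ∀ v, R v ≤ ρ * ‖v‖)
    (h : Slack R A DF ℓ ι t z 0) : LocStable R A DF ℓ ι t z := by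
  let e := LinearEquiv.ofInjective (ι : Z →ₗ[ℝ] V) hι
  let f : V →ₗ.[ℝ] ℝ :=
    ⟨LinearMap.range (ι : Z →ₗ[ℝ] V),
      (-(DI A DF ℓ ι t z : Z →ₗ[ℝ] ℝ)).comp (e.symm : _ →ₗ[ℝ] Z)⟩
  obtain ⟨g, hg1, hg2⟩ := exists_extension_of_le_sublinear f R
    (fun c hc x => hh c x hc.le) (sub_add_of_convex R hc hh) (by
      intro x
      obtain ⟨y, rfl⟩ := e.surjective x
      have := h y
      simp only [zero_mul, add_zero] at this
      have e1 : f (e y) = -(DI A DF ℓ ι t z y) := by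
        change (-(DI A DF ℓ ι t z : Z →ₗ[ℝ] ℝ)) (e.symm (e y)) = _
        simp
      rw [e1]
      exact this)
  have hb : ∀ v, ‖g v‖ ≤ ρ * ‖v‖ := by
    intro v
    rw [Real.norm_eq_abs, abs_le]
    have h1 := (hg2 v).trans (hρ v)
    have h2 := (hg2 (-v)).trans (hρ (-v))
    rw [map_neg, norm_neg] at h2
    constructor <;> linarith
  have h0 : R 0 = 0 := by simpa using hh 0 0 le_rfl
  refine ⟨g.mkContinuous ρ hb, ?_, ?_⟩
  · intro v
    simpa [h0] using hg2 v
  · ext y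
    have e1 : f (e y) = -(DI A DF ℓ ι t z y) := by
      change (-(DI A DF ℓ ι t z : Z →ₗ[ℝ] ℝ)) (e.symm (e y)) = _
      simp
    have e2 := hg1 (e y)
    rw [e1] at e2
    have e3 : g (ι y) = -(DI A DF ℓ ι t z y) := e2
    simp [e3]

lemma energy_hasDeriv (ι : Z →L[ℝ] V)
    (A : Z →L[ℝ] Z →L[ℝ] ℝ) (F : Z → ℝ) (DF : Z → V →L[ℝ] ℝ) (ℓ : ℝ → V →L[ℝ] ℝ)
    (hsym : ∀ z w : Z, A z w = A w z)
    (hF : ∀ w : Z, HasFDerivAt F ((DF w).comp ι) w) (t : ℝ) (z d : Z) :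
    HasDerivAt (fun s : ℝ => energy A F ℓ ι t (z + s • d)) (DI A DF ℓ ι t z d) 0 := by
  have hl : HasDerivAt (fun s : ℝ => z + s • d) d 0 := by
    simpa using ((hasDerivAt_id (0:ℝ)).smul_const d).const_add z
  have h1 : HasDerivAt (fun s : ℝ => F (z + s • d)) (DF z (ι d)) 0 := by
    have h : HasFDerivAt F ((DF z).comp ι) (z + (0:ℝ) • d) := by simpa using hF z
    exact h.comp_hasDerivAt (0:ℝ) hl
  have h2 : HasDerivAt (fun s : ℝ => ℓ t (ι (z + s • d))) (ℓ t (ι d)) 0 :=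
    ((ℓ t).comp ι).hasFDerivAt.comp_hasDerivAt (0:ℝ) hl
  have h3 : HasDerivAt (fun s : ℝ => (1/2 : ℝ) * A (z + s • d) (z + s • d)) (A z d) 0 := by
    have e : (fun s : ℝ => (1/2 : ℝ) * A (z + s • d) (z + s • d)) =
        fun s : ℝ => (1/2 : ℝ) * A z z + s * A z d + s ^ 2 * ((1/2 : ℝ) * A d d) := by
      funext s
      simp [hsym d z]
      ring
    rw [e]
    have := (((hasDerivAt_id (0:ℝ)).mul_const (A z d)).const_add ((1/2 : ℝ) * A z z)).add
      (((hasDerivAt_id (0:ℝ)).pow 2).mul_const ((1/2 : ℝ) * A d d))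
    exact HasDerivAt.congr_deriv this (by simp)
  have := (h3.add h1).sub h2
  exact this

/-- First-order condition over the ball. -/
lemma var_ineq (ι : Z →L[ℝ] V)
    (A : Z →L[ℝ] Z →L[ℝ] ℝ) (F : Z → ℝ) (DF : Z → V →L[ℝ] ℝ) (ℓ : ℝ → V →L[ℝ] ℝ)
    (R : V → ℝ) (hc : ConvexOn ℝ Set.univ R)
    (hsym : ∀ z w : Z, A z w = A w z)
    (hF : ∀ w : Z, HasFDerivAt F ((DF w).comp ι) w) (t τ : ℝ) (z0 z1 : Z)
    (hz1 : ‖ι (z1 - z0)‖ ≤ τ)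
    (hmin : ∀ w : Z, ‖ι (w - z0)‖ ≤ τ →
        energy A F ℓ ι t z1 + R (ι (z1 - z0)) ≤ energy A F ℓ ι t w + R (ι (w - z0)))
    (v : Z) (hv : ‖ι v‖ ≤ τ) :
    DI A DF ℓ ι t z1 (z1 - z0) + R (ι (z1 - z0)) ≤ DI A DF ℓ ι t z1 v + R (ι v) := by
  have hd := (energy_hasDeriv ι A F DF ℓ hsym hF t z1 (v - (z1 - z0))).tendsto_slope_zero_right
  have hge : R (ι (z1 - z0)) - R (ι v) ≤ DI A DF ℓ ι t z1 (v - (z1 - z0)) := by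
    refine ge_of_tendsto hd ?_
    filter_upwards [Ioo_mem_nhdsGT (zero_lt_one (α := ℝ))] with s hs
    have hs0 := hs.1
    have hs1 : 0 ≤ 1 - s := by linarith [hs.2]
    have ew : ι (z1 + s • (v - (z1 - z0)) - z0) = (1 - s) • ι (z1 - z0) + s • ι v := by
      rw [← map_smul, ← map_smul, ← map_add]
      congr 1
      module
    have hb : ‖ι (z1 + s • (v - (z1 - z0)) - z0)‖ ≤ τ := by
      rw [ew]
      refine (norm_add_le _ _).trans ?_
      rw [norm_smul, norm_smul, Real.norm_of_nonneg hs1, Real.norm_of_nonneg hs0.le]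
      nlinarith
    have h1 := hmin _ hb
    have h2 := hc.2 (Set.mem_univ (ι (z1 - z0))) (Set.mem_univ (ι v)) hs1 hs0.le (by ring)
    rw [ew] at h1
    simp only [smul_eq_mul] at h2
    simp only [zero_add, zero_smul, add_zero, smul_eq_mul]
    rw [inv_mul_eq_div, le_div_iff₀ hs0]
    linarith
  rw [map_sub (DI A DF ℓ ι t z1)] at hge
  linarith

lemma DI_mono (ι : Z →L[ℝ] V)
    (A : Z →L[ℝ] Z →L[ℝ] ℝ) (DF : Z → V →L[ℝ] ℝ) (D2F : Z → Z →L[ℝ] V →L[ℝ] ℝ)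
    (ℓ : ℝ → V →L[ℝ] ℝ) (κ : ℝ)
    (hD : ∀ w : Z, HasFDerivAt DF (D2F w) w)
    (hconv : UniformlyConvex A D2F ι κ) (t : ℝ) (z d : Z) :
    κ * ‖d‖ ^ 2 ≤ DI A DF ℓ ι t (z + d) d - DI A DF ℓ ι t z d := by
  have hd : ∀ s : ℝ, HasDerivAt (fun s : ℝ => A (z + s • d) d + DF (z + s • d) (ι d))
      (A d d + D2F (z + s • d) d (ι d)) s := by
    intro s
    have hl : HasDerivAt (fun s : ℝ => z + s • d) d s := by
      simpa using ((hasDerivAt_id s).smul_const d).const_add z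
    have h1 : HasDerivAt (fun s : ℝ => A (z + s • d) d) (A d d) s := by
      have h3 : HasFDerivAt (fun w : Z => A w d)
          ((ContinuousLinearMap.apply ℝ ℝ d).comp A) (z + s • d) :=
        ((ContinuousLinearMap.apply ℝ ℝ d).comp A).hasFDerivAt
      exact h3.comp_hasDerivAt s hl
    have h2 : HasDerivAt (fun s : ℝ => DF (z + s • d) (ι d)) (D2F (z + s • d) d (ι d)) s := by
      have h3 : HasFDerivAt (fun w : Z => DF w (ι d))
          ((ContinuousLinearMap.apply ℝ ℝ (ι d)).comp (D2F (z + s • d))) (z + s • d) :=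
        ((ContinuousLinearMap.apply ℝ ℝ (ι d)).hasFDerivAt (x := DF (z + s • d))).comp
          (z + s • d) (hD (z + s • d))
      exact h3.comp_hasDerivAt s hl
    exact h1.add h2
  have := mul_sub_le_image_sub_of_le_deriv (fun s => (hd s).differentiableAt)
    (C := κ * ‖d‖ ^ 2) (fun s => by rw [(hd s).deriv]; exact hconv.2 _ _) zero_le_one
  simp only [one_smul, zero_smul, add_zero, sub_zero, mul_one] at this
  simp only [DI, ContinuousLinearMap.sub_apply, ContinuousLinearMap.add_apply,
    ContinuousLinearMap.comp_apply]
  linarith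

/-- One step of the scheme: the slack decreases as long as the iterate is unstable. -/
lemma step (ι : Z →L[ℝ] V) (ιX : V →L[ℝ] X)
    (A : Z →L[ℝ] Z →L[ℝ] ℝ) (α : ℝ) (F : Z → ℝ) (DF : Z → V →L[ℝ] ℝ)
    (D2F : Z → Z →L[ℝ] V →L[ℝ] ℝ) (R : V → ℝ) (ℓ : ℝ → V →L[ℝ] ℝ) (L T : ℝ)
    (hstand : StandingAssumptions ι ιX A α F DF D2F R ℓ L T)
    (κ : ℝ) (hconv : UniformlyConvex A D2F ι κ)
    (τ : ℝ) (hτ : 0 < τ) (s t : ℝ) (hs : 0 ≤ s) (hst : s ≤ t) (htT : t ≤ T) (z0 z1 : Z)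
    (hz1 : ‖ι (z1 - z0)‖ ≤ τ)
    (hmin : ∀ w : Z, ‖ι (w - z0)‖ ≤ τ →
        energy A F ℓ ι t z1 + R (ι (z1 - z0)) ≤ energy A F ℓ ι t w + R (ι (w - z0)))
    (μ : ℝ) (hsl : Slack R A DF ℓ ι s z0 μ) (hun : ¬ LocStable R A DF ℓ ι t z1) :
    ‖ι (z1 - z0)‖ = τ ∧ Slack R A DF ℓ ι t z1 (μ - κ * τ + L * (t - s)) ∧
      0 < μ - κ * τ + L * (t - s) := by
  obtain ⟨hι, -, hemb, -, hsym, -, -, -, hF, hD, -, hL, hlip, hT, hc, -, hR0, hh, ρ₁, ρ, -, -, hρ⟩ :=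
    hstand
  have hvar := var_ineq ι A F DF ℓ R hc hsym hF t τ z0 z1 hz1 hmin
  have hstab : Slack R A DF ℓ ι t z1 0 → False := fun h =>
    hun (h.locStable hι hc hh ρ (fun v => (hρ v).2))
  set d := z1 - z0 with hd
  set G := DI A DF ℓ ι t z1 d + R (ι d) with hG
  have hslG : Slack R A DF ℓ ι t z1 (-G / τ) := by
    intro v
    rcases eq_or_ne (ι v) 0 with h0 | h0
    · have : v = 0 := hι (by simpa using h0)
      subst this
      have h0 : R 0 = 0 := by simpa using hh 0 0 le_rfl
      simp [h0]
    · have hn : 0 < ‖ι v‖ := norm_pos_iff.2 h0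
      have hp : 0 < τ / ‖ι v‖ := div_pos hτ hn
      have h1 := hvar ((τ / ‖ι v‖) • v) (by
        rw [map_smul, norm_smul, Real.norm_of_nonneg hp.le, div_mul_cancel₀ _ hn.ne'])
      rw [map_smul, map_smul, hh _ _ hp.le, smul_eq_mul, ← mul_add] at h1
      have h2 := mul_le_mul_of_nonneg_left h1 (div_pos hn hτ).le
      rw [← mul_assoc, div_mul_div_cancel₀ hτ.ne', div_self hn.ne', one_mul] at h2
      have : -G / τ * ‖ι v‖ = -(‖ι v‖ / τ * G) := by ring
      linarith
  have hpos : 0 < -G / τ := by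
    by_contra hcon
    exact hstab (hslG.mono (not_lt.1 hcon))
  have hGneg : G < 0 := by
    have := (div_pos_iff_of_pos_right hτ).1 hpos
    linarith
  have hnorm : ‖ι d‖ = τ := by
    by_contra hne
    have hlt : ‖ι d‖ < τ := lt_of_le_of_ne hz1 hne
    have hpd : 0 < ‖ι d‖ := by
      rw [norm_pos_iff]
      intro h0
      have : d = 0 := hι (by simpa using h0)
      have h0' : R 0 = 0 := by simpa using hh 0 0 le_rfl
      rw [hG, this] at hGneg
      simp [h0'] at hGneg
    have hp : 0 < τ / ‖ι d‖ := div_pos hτ hpd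
    have h1 := hvar ((τ / ‖ι d‖) • d) (by
        rw [map_smul, norm_smul, Real.norm_of_nonneg hp.le, div_mul_cancel₀ _ hpd.ne'])
    rw [map_smul, map_smul, hh _ _ hp.le, smul_eq_mul, ← mul_add, ← hG] at h1
    have : 1 < τ / ‖ι d‖ := (one_lt_div hpd).2 hlt
    nlinarith
  have hle : -G / τ ≤ μ - κ * τ + L * (t - s) := by
    rw [div_le_iff₀ hτ]
    have hz : z0 + d = z1 := by rw [hd]; abel
    have h1 := DI_mono ι A DF D2F ℓ κ hD hconv s z0 d
    rw [hz] at h1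
    have h2 := hsl d
    rw [hnorm] at h2
    have h3 : DI A DF ℓ ι t z1 d = DI A DF ℓ ι s z1 d - (ℓ t - ℓ s) (ι d) := by
      simp [DI]
    have h4 : (ℓ t - ℓ s) (ι d) ≤ L * (t - s) * τ := by
      have h5 := hlip.dist_le_mul t ⟨hs.trans hst, htT⟩ s ⟨hs, hst.trans htT⟩
      rw [dist_eq_norm, Real.dist_eq, abs_of_nonneg (by linarith), Real.coe_toNNReal L hL] at h5
      have h6 := (le_abs_self _).trans ((ℓ t - ℓ s).le_opNorm (ι d))
      rw [hnorm] at h6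
      exact h6.trans (mul_le_mul_of_nonneg_right h5 hτ.le)
    have h7 : κ * τ ^ 2 ≤ κ * ‖d‖ ^ 2 := by
      apply mul_le_mul_of_nonneg_left _ hconv.1.le
      have := hemb d
      rw [hnorm] at this
      gcongr
    have : (μ - κ * τ + L * (t - s)) * τ = μ * τ - κ * τ ^ 2 + L * (t - s) * τ := by ring
    linarith
  exact ⟨hnorm, hslG.mono hle, hpos.trans_le hle⟩

/-- Lemma 3.11: under `κ`-uniform convexity there exists
`m ∈ ℕ` independent of `τ` (one may take `m = ⌈|ℓ|_Lip/κ⌉ + 1`) such that for every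
iteration index `k < N̂(τ)` there is an index `k̂ ∈ [k, k+m]` with
`0 ∈ ∂R(0) + D_zI(t_{k̂−1}, z_{k̂})`, i.e. after at most `m` iterations the iterate
is again locally stable. -/
theorem statement8
    (ι : Z →L[ℝ] V) (ιX : V →L[ℝ] X)
    (A : Z →L[ℝ] Z →L[ℝ] ℝ) (α : ℝ) (F : Z → ℝ) (DF : Z → V →L[ℝ] ℝ)
    (D2F : Z → Z →L[ℝ] V →L[ℝ] ℝ) (R : V → ℝ) (ℓ : ℝ → V →L[ℝ] ℝ) (L T : ℝ)
    (hstand : StandingAssumptions ι ιX A α F DF D2F R ℓ L T)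
    (κ : ℝ) (hconv : UniformlyConvex A D2F ι κ)
    (τ : ℝ) (hτ : 0 < τ) (z₀ : Z) (hz₀ : LocStable R A DF ℓ ι 0 z₀)
    (t : ℕ → ℝ) (z : ℕ → Z) (hscheme : Scheme A F R ℓ ι T τ z₀ t z)
    (N : ℕ) (hN : t N = T) (hNfirst : ∀ j : ℕ, j < N → t j < T)
    (Nhat : ℕ) (hNhat1 : N ≤ Nhat) (hNhat2 : 1 ≤ Nhat)
    (hNhatStable : LocStable R A DF ℓ ι (t (Nhat - 1)) (z Nhat))
    (hNhatFirst : ∀ j : ℕ, N ≤ j → 1 ≤ j → j < Nhat →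
      ¬ LocStable R A DF ℓ ι (t (j - 1)) (z j)) :
    ∀ k : ℕ, k < Nhat → ∃ khat : ℕ, k ≤ khat ∧ khat ≤ k + (⌈L / κ⌉₊ + 1) ∧
      1 ≤ khat ∧ LocStable R A DF ℓ ι (t (khat - 1)) (z khat) := by
  intro k _
  have hstep := step ι ιX A α F DF D2F R ℓ L T hstand κ hconv τ hτ
  obtain ⟨hι, -, hemb, -, hsym, -, -, -, hF, hD, -, hL, hlip, hT, hc, -, hR0, hh, ρ₁, ρ, -, -, hρ⟩ :=
    hstand
  obtain ⟨ht0, hz0, hsch⟩ := hscheme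
  have hκ := hconv.1
  have htT : ∀ n, t n ≤ T := by
    intro n
    cases n with
    | zero => rw [ht0]; exact hT.le
    | succ n => rw [(hsch n).2.2]; exact min_le_right _ _
  have hmono : ∀ n, t n ≤ t (n + 1) := by
    intro n
    rw [(hsch n).2.2]
    exact le_min (by linarith [(hsch n).1]) (htT n)
  have hdiff : ∀ n, t (n + 1) - t n ≤ τ := by
    intro n
    have h1 : t (n + 1) ≤ t n + τ - ‖ι (z (n + 1) - z n)‖ := by
      rw [(hsch n).2.2]; exact min_le_left _ _
    linarith [norm_nonneg (ι (z (n + 1) - z n))]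
  have hnn : ∀ n, 0 ≤ t n := by
    intro n
    induction n with
    | zero => rw [ht0]
    | succ n ih => exact ih.trans (hmono n)
  have hteq : ∀ n, ‖ι (z (n + 1) - z n)‖ = τ → t (n + 1) = t n := by
    intro n h
    rw [(hsch n).2.2, h, add_sub_cancel_right]
    exact min_eq_left (htT n)
  have hfirst : LocStable R A DF ℓ ι (t 0) (z 1) := by
    by_contra hun
    have h0 : Slack R A DF ℓ ι (t 0) (z 0) 0 := by
      rw [ht0, hz0]; exact hz₀.slack hh
    have := (hstep (t 0) (t 0) (hnn 0) le_rfl (htT 0) (z 0) (z 1) (hsch 0).1 (hsch 0).2.1 0 h0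
      hun).2.2
    have := mul_pos hκ hτ
    linarith
  -- every unstable iterate has slack at most `(L - κ) τ` and a stationary time
  have hinv : ∀ n, LocStable R A DF ℓ ι (t n) (z (n + 1)) ∨
      (t (n + 1) = t n ∧ Slack R A DF ℓ ι (t n) (z (n + 1)) ((L - κ) * τ)) := by
    intro n
    induction n with
    | zero => exact Or.inl hfirst
    | succ n ih =>
      by_cases hun : LocStable R A DF ℓ ι (t (n + 1)) (z (n + 1 + 1))
      · exact Or.inl hun
      right
      rcases ih with ih | ⟨ih1, ih2⟩
      · obtain ⟨a, b, -⟩ := hstep (t n) (t (n + 1)) (hnn n) (hmono n) (htT _) (z (n + 1))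
          (z (n + 1 + 1)) (hsch _).1 (hsch _).2.1 0 (ih.slack hh) hun
        refine ⟨hteq _ a, b.mono ?_⟩
        have := mul_le_mul_of_nonneg_left (hdiff n) hL
        linarith
      · obtain ⟨a, b, -⟩ := hstep (t n) (t (n + 1)) (hnn n) (hmono n) (htT _) (z (n + 1))
          (z (n + 1 + 1)) (hsch _).1 (hsch _).2.1 _ ih2 hun
        refine ⟨hteq _ a, b.mono ?_⟩
        rw [ih1]
        have := mul_pos hκ hτ
        linarith
  rcases k with _ | k
  · exact ⟨1, by omega, by omega, le_rfl, hfirst⟩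
  by_contra hcon
  push Not at hcon
  have hun : ∀ j, j ≤ ⌈L / κ⌉₊ → ¬ LocStable R A DF ℓ ι (t (k + j)) (z (k + j + 1)) := by
    intro j hj
    exact hcon (k + j + 1) (by omega) (by omega) (by omega)
  have hdec : ∀ j, j ≤ ⌈L / κ⌉₊ → t (k + j + 1) = t (k + j) ∧
      Slack R A DF ℓ ι (t (k + j)) (z (k + j + 1)) ((L - κ - j * κ) * τ) := by
    intro j
    induction j with
    | zero =>
      intro hj
      rcases hinv k with h | h
      · exact absurd h (hun 0 hj)
      · simpa using h
    | succ j ih =>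
      intro hj
      obtain ⟨i1, i2⟩ := ih (by omega)
      obtain ⟨a, b, -⟩ := hstep (t (k + j)) (t (k + j + 1)) (hnn _) (hmono _) (htT _)
        (z (k + j + 1)) (z (k + j + 1 + 1)) (hsch _).1 (hsch _).2.1 _ i2 (hun (j + 1) hj)
      refine ⟨hteq _ a, b.mono ?_⟩
      rw [i1]
      push_cast
      linarith
  obtain ⟨-, hS⟩ := hdec ⌈L / κ⌉₊ le_rfl
  have hceil : L ≤ (⌈L / κ⌉₊ : ℝ) * κ := (div_le_iff₀ hκ).1 (Nat.le_ceil _)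
  refine hun _ le_rfl ((hS.mono ?_).locStable hι hc hh ρ (fun v => (hρ v).2))
  exact mul_nonpos_of_nonpos_of_nonneg (by linarith) hτ.le

end RIS
end
end
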